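/- arXiv:2112.02284 — 3 statements merged into one kernel-verified Lean document; each statement's English description precedes it below -/
import Mathlib

section
/- Fix λ > 0 and define the sequence X₀ ≡ 0, X_{n+1} = 𝐓Xₙ for n ≥ 0; then Xₙ is a.s. nondecreasing in n and Xₙ ↗ X_∞ a.s. for some [0,∞]-valued random variable X_∞. The problem of minimizing h(X) + λ·E[ρX] over X ∈ L⁰₊ has a solution if and only if E[ρ·X_∞] < ∞; and in that case X_∞ is a solution. -/
/-!
The risk measure `h` is convex with marginal `-ψ_X(X)`, so `X ≥ 0` with `E[ρX] < ∞` minimizes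
`h(X) + λ E[ρX]` exactly when `ψ_X(X) ≤ λρ` a.s. with equality on `{X > 0}`, that is, when
`X = 𝐓X`. The convexity enters through the subgradient inequality `werm_sub_le`,
`h(X) - h(Y) ≤ E[ψ_X(X)(Y - X)]`, which is `e^t ≥ 1 + t` at
`t = -a(Y - X) - log(φ_Y(a)/φ_X(a))`, weighted by `e^{-aX}/φ_X(a)` and integrated in `a` and `ω`.

The transform `𝐓` is monotone (`Ttrans_le`), because a larger payoff has a smaller `φ` and hence a
larger `ψ`; starting from `0` the iterates therefore increase.

If `E[ρX_∞] < ∞`, then `X_∞` is a.s. finite and dominated convergence (`tendsto_psi`) turns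
`ψ_{Xₙ}(Xₙ₊₁) ≤ λρ`, with equality where `Xₙ₊₁ > 0`, into the first-order condition for `X_∞`,
which is sufficient for optimality (`optimal_of_foc`).

Conversely, a minimizer `X` has `E[ρX] < ∞`, since the objective is finite at `0`, and satisfies
`ψ_X(X) ≤ λρ` (`foc_of_optimal`): otherwise raising `X` by `ε` on `{ψ_X(X) > λρ}` would lower the
objective. Hence `𝐓X ≤ X`, all iterates stay below `X` by monotonicity, and
`E[ρX_∞] ≤ E[ρX] < ∞`.
-/

open MeasureTheory Filter Set
open scoped ENNReal

noncomputable section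

variable {Ω : Type*} [MeasurableSpace Ω]

/-- Entropic risk measure `h_a(X) = (1/a) log E[e^{-aX}]`. -/
def entropic (P : Measure Ω) (a : ℝ) (X : Ω → ℝ) : ℝ :=
  (1 / a) * Real.log (∫ ω, Real.exp (-a * X ω) ∂P)

/-- Weighted entropic risk measure `h(X) = ∫_{[a₀,a₁]} h_a(X) m(da)`. -/
def werm (P : Measure Ω) (m : Measure ℝ) (a₀ a₁ : ℝ) (X : Ω → ℝ) : ℝ :=
  ∫ a in Set.Icc a₀ a₁, entropic P a X ∂m

/-- Marginal risk density transform `h′(X) = -∫_{[a₀,a₁]} e^{-aX}/E[e^{-aX}] m(da)`. -/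
def hprime (P : Measure Ω) (m : Measure ℝ) (a₀ a₁ : ℝ) (X : Ω → ℝ) (ω : Ω) : ℝ :=
  -∫ a in Set.Icc a₀ a₁, Real.exp (-a * X ω) / (∫ ω', Real.exp (-a * X ω') ∂P) ∂m

/-- Extended-real-valued expectation `E[f] = ∫ f⁺ - ∫ f⁻ ∈ [-∞,∞]`. -/
def eint (P : Measure Ω) (f : Ω → ℝ) : EReal :=
  ((∫⁻ ω, ENNReal.ofReal (f ω) ∂P : ℝ≥0∞) : EReal)
    - ((∫⁻ ω, ENNReal.ofReal (-(f ω)) ∂P : ℝ≥0∞) : EReal)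

/-- `E[ρX] ∈ [0,∞]` for a nonnegative payoff. -/
def budget (P : Measure Ω) (ρ X : Ω → ℝ) : ℝ≥0∞ := ∫⁻ ω, ENNReal.ofReal (ρ ω * X ω) ∂P

/-- `X ∈ L⁰₊`: a nonnegative random variable. -/
def Lpos (P : Measure Ω) (X : Ω → ℝ) : Prop := Measurable X ∧ ∀ᵐ ω ∂P, 0 ≤ X ω

/-- Objective of the Lagrangian risk-minimization problem: `h(X) + λ E[ρX]`. -/
def robj (P : Measure Ω) (m : Measure ℝ) (a₀ a₁ : ℝ) (ρ : Ω → ℝ) (lam : ℝ) (X : Ω → ℝ) : EReal :=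
  ((werm P m a₀ a₁ X : ℝ) : EReal) + (lam : EReal) * ((budget P ρ X : ℝ≥0∞) : EReal)

/-- `ψ_X(y) = ∫_{[a₀,a₁]} e^{-ay} / E[e^{-aX}] m(da)`. -/
def psi (P : Measure Ω) (m : Measure ℝ) (a₀ a₁ : ℝ) (X : Ω → ℝ) (y : ℝ) : ℝ :=
  ∫ a in Set.Icc a₀ a₁, Real.exp (-a * y) / (∫ ω, Real.exp (-a * X ω) ∂P) ∂m

/-- Inverse of `ψ_X` on `(0,∞)` (realized via `sSup`, since `ψ_X` is continuous, strictly
decreasing with limits `∞` at `-∞` and `0` at `∞`). -/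
def psiInv (P : Measure Ω) (m : Measure ℝ) (a₀ a₁ : ℝ) (X : Ω → ℝ) (z : ℝ) : ℝ :=
  sSup {y : ℝ | z ≤ psi P m a₀ a₁ X y}

/-- The transform `𝐓X = max(ψ_X⁻¹(λρ), 0)`. -/
def Ttrans (P : Measure Ω) (m : Measure ℝ) (a₀ a₁ lam : ℝ) (ρ : Ω → ℝ) (X : Ω → ℝ) : Ω → ℝ :=
  fun ω => max (psiInv P m a₀ a₁ X (lam * ρ ω)) 0

/-- `X ∈ 𝒳(x)`: nonnegative and `E[ρX] ≤ x`. -/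
def feasible (P : Measure Ω) (ρ : Ω → ℝ) (x : ℝ) (X : Ω → ℝ) : Prop :=
  Lpos P X ∧ budget P ρ X ≤ ENNReal.ofReal x

/-- `γ₁(x)`: the minimal value of `h` over `𝒳(x)`. -/
def gamma1 (P : Measure Ω) (m : Measure ℝ) (a₀ a₁ : ℝ) (ρ : Ω → ℝ) (x : ℝ) : ℝ :=
  sInf (werm P m a₀ a₁ '' {X | feasible P ρ x X})

/-- Expected utility `E[U(X)] ∈ [-∞,∞]`. -/
def eutil (P : Measure Ω) (U : ℝ → ℝ) (X : Ω → ℝ) : EReal := eint P (fun ω => U (X ω))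

/-- Full Lagrangian objective `E[U(X)] - μ h(X) - λ E[ρX]`. -/
def fullObj (P : Measure Ω) (m : Measure ℝ) (a₀ a₁ : ℝ) (ρ : Ω → ℝ) (U : ℝ → ℝ)
    (μ lam : ℝ) (X : Ω → ℝ) : EReal :=
  eutil P U X - ((μ * werm P m a₀ a₁ X : ℝ) : EReal)
    - (lam : EReal) * ((budget P ρ X : ℝ≥0∞) : EReal)

/-! ### The Laplace transform `φ_X` and integrability over `[a₀,a₁]` -/

/-- `φ_X(a) = E[e^{-aX}]`. -/
def phi (P : Measure Ω) (X : Ω → ℝ) (a : ℝ) : ℝ := ∫ ω, Real.exp (-a * X ω) ∂P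

lemma integrable_exp (P : Measure Ω) [IsProbabilityMeasure P] {X : Ω → ℝ} (hX : Lpos P X)
    {a : ℝ} (ha : 0 ≤ a) : Integrable (fun ω => Real.exp (-a * X ω)) P := by
  have := hX.1
  refine Integrable.of_bound (C := 1) (by fun_prop) ?_
  filter_upwards [hX.2] with ω h
  rw [Real.norm_eq_abs, Real.abs_exp, Real.exp_le_one_iff]
  nlinarith [mul_nonneg ha h]

lemma phi_pos (P : Measure Ω) [IsProbabilityMeasure P] {X : Ω → ℝ} (hX : Lpos P X)
    {a : ℝ} (ha : 0 ≤ a) : 0 < phi P X a :=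
  integral_exp_pos (integrable_exp P hX ha)

lemma phi_anti (P : Measure Ω) [IsProbabilityMeasure P] {X : Ω → ℝ} (hX : Lpos P X)
    {a b : ℝ} (ha : 0 ≤ a) (hab : a ≤ b) : phi P X b ≤ phi P X a := by
  refine integral_mono_ae (integrable_exp P hX (ha.trans hab)) (integrable_exp P hX ha) ?_
  filter_upwards [hX.2] with ω h
  have := mul_le_mul_of_nonneg_right hab h
  exact Real.exp_le_exp.2 (by linarith)

lemma phi_anti_payoff (P : Measure Ω) [IsProbabilityMeasure P] {X Y : Ω → ℝ} (hX : Lpos P X)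
    (hY : Lpos P Y) (hXY : X ≤ᵐ[P] Y) {a : ℝ} (ha : 0 ≤ a) : phi P Y a ≤ phi P X a := by
  refine integral_mono_ae (integrable_exp P hY ha) (integrable_exp P hX ha) ?_
  filter_upwards [hXY] with ω h
  have := mul_le_mul_of_nonneg_left h ha
  exact Real.exp_le_exp.2 (by linarith)

lemma phi_le_one (P : Measure Ω) [IsProbabilityMeasure P] {X : Ω → ℝ} (hX : Lpos P X)
    {a : ℝ} (ha : 0 ≤ a) : phi P X a ≤ 1 := by
  have := phi_anti P hX le_rfl ha
  simpa [phi] using this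

lemma measurable_phi (P : Measure Ω) [IsProbabilityMeasure P] {X : Ω → ℝ} (hX : Measurable X) :
    Measurable (phi P X) := by
  have : StronglyMeasurable (fun p : ℝ × Ω => Real.exp (-p.1 * X p.2)) :=
    Measurable.stronglyMeasurable (by fun_prop)
  exact this.integral_prod_right.measurable

lemma ae_mem_weights (m : Measure ℝ) (a₀ a₁ : ℝ) :
    ∀ᵐ a ∂(m.restrict (Icc a₀ a₁)), a ∈ Icc a₀ a₁ := ae_restrict_mem measurableSet_Icc

lemma integrable_one_div (m : Measure ℝ) [IsFiniteMeasure m] {a₀ a₁ : ℝ} (ha₀ : 0 < a₀) :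
    Integrable (fun a => 1 / a) (m.restrict (Icc a₀ a₁)) := by
  refine Integrable.of_bound (C := 1 / a₀) (by fun_prop) ?_
  filter_upwards [ae_mem_weights m a₀ a₁] with a ha
  have : 0 < a := ha₀.trans_le ha.1
  rw [Real.norm_of_nonneg (by positivity)]
  exact one_div_le_one_div_of_le ha₀ ha.1

/-- `a ↦ h_a(X)` is bounded on `[a₀,a₁]`, so `h(X)` is never a junk value for `X ∈ L⁰₊`. -/
lemma integrable_entropic (P : Measure Ω) [IsProbabilityMeasure P] (m : Measure ℝ)
    [IsFiniteMeasure m] {a₀ a₁ : ℝ} (ha₀ : 0 < a₀) {X : Ω → ℝ} (hX : Lpos P X) :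
    Integrable (fun a => entropic P a X) (m.restrict (Icc a₀ a₁)) := by
  have hφ := measurable_phi P hX.1
  have hmeas : Measurable (fun a => entropic P a X) := by
    change Measurable (fun a => (1 / a) * Real.log (phi P X a))
    fun_prop
  refine Integrable.of_bound (C := 1 / a₀ * (-Real.log (phi P X a₁))) hmeas.aestronglyMeasurable ?_
  filter_upwards [ae_mem_weights m a₀ a₁] with a ha
  have ha' : 0 < a := ha₀.trans_le ha.1
  change ‖(1 / a) * Real.log (phi P X a)‖ ≤ _
  have h1 : Real.log (phi P X a) ≤ 0 :=
    Real.log_nonpos (phi_pos P hX ha'.le).le (phi_le_one P hX ha'.le)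
  have h2 : Real.log (phi P X a₁) ≤ Real.log (phi P X a) :=
    Real.log_le_log (phi_pos P hX (ha'.le.trans ha.2)) (phi_anti P hX ha'.le ha.2)
  rw [norm_mul, Real.norm_of_nonneg (by positivity), Real.norm_of_nonpos h1]
  exact mul_le_mul (one_div_le_one_div_of_le ha₀ ha.1) (by linarith) (by linarith) (by positivity)

lemma integrable_psi (P : Measure Ω) [IsProbabilityMeasure P] (m : Measure ℝ)
    [IsFiniteMeasure m] {a₀ a₁ : ℝ} (ha₀ : 0 < a₀) {X : Ω → ℝ} (hX : Lpos P X) (y : ℝ) :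
    Integrable (fun a => Real.exp (-a * y) / phi P X a) (m.restrict (Icc a₀ a₁)) := by
  have hφ := measurable_phi P hX.1
  refine Integrable.of_bound (C := Real.exp (a₁ * |y|) / phi P X a₁)
    (Measurable.aestronglyMeasurable (by fun_prop)) ?_
  filter_upwards [ae_mem_weights m a₀ a₁] with a ha
  have ha' : 0 < a := ha₀.trans_le ha.1
  have h1 := phi_pos P hX ha'.le
  have h2 := phi_pos P hX (ha'.le.trans ha.2)
  rw [Real.norm_of_nonneg (by positivity)]
  refine div_le_div₀ (Real.exp_pos _).le (Real.exp_le_exp.2 ?_) h2 (phi_anti P hX ha'.le ha.2)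
  have h3 : a * |y| ≤ a₁ * |y| := mul_le_mul_of_nonneg_right ha.2 (abs_nonneg y)
  have h4 := mul_le_mul_of_nonneg_left (neg_abs_le y) ha'.le
  linarith

lemma psi_eq (P : Measure Ω) (m : Measure ℝ) (a₀ a₁ : ℝ) (X : Ω → ℝ) (y : ℝ) :
    psi P m a₀ a₁ X y = ∫ a in Icc a₀ a₁, Real.exp (-a * y) / phi P X a ∂m := rfl

/-! ### The function `ψ_X`, its inverse and the transform `𝐓` -/

section psi

variable (P : Measure Ω) [IsProbabilityMeasure P] (m : Measure ℝ) [IsProbabilityMeasure m]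
  {a₀ a₁ : ℝ} {X Y : Ω → ℝ}

lemma psi_pos (ha₀ : 0 < a₀) (hm : m (Icc a₀ a₁) = 1) (hX : Lpos P X) (y : ℝ) :
    0 < psi P m a₀ a₁ X y := by
  rw [psi_eq, setIntegral_pos_iff_support_of_nonneg_ae]
  · have : Icc a₀ a₁ ⊆ Function.support (fun a => Real.exp (-a * y) / phi P X a) := by
      intro a ha
      have h1 := phi_pos P hX (ha₀.le.trans ha.1)
      exact (by positivity : (0 : ℝ) < _).ne'
    rw [inter_eq_right.2 this, hm]
    exact zero_lt_one
  · filter_upwards [ae_mem_weights m a₀ a₁] with a ha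
    have h1 := phi_pos P hX (ha₀.le.trans ha.1)
    exact div_nonneg (Real.exp_pos _).le h1.le
  · exact integrable_psi P m ha₀ hX y

lemma psi_le_of_le (ha₀ : 0 < a₀) (hX : Lpos P X) {y y' : ℝ} (h : y ≤ y') :
    psi P m a₀ a₁ X y' ≤ Real.exp (-a₀ * (y' - y)) * psi P m a₀ a₁ X y := by
  rw [psi_eq, psi_eq, ← integral_const_mul]
  refine integral_mono_ae (integrable_psi P m ha₀ hX y')
    ((integrable_psi P m ha₀ hX y).const_mul _) ?_
  filter_upwards [ae_mem_weights m a₀ a₁] with a ha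
  have h1 := phi_pos P hX (ha₀.le.trans ha.1)
  rw [mul_div_assoc', ← Real.exp_add]
  refine div_le_div_of_nonneg_right (Real.exp_le_exp.2 ?_) h1.le
  have := mul_le_mul_of_nonneg_right ha.1 (sub_nonneg.2 h)
  linarith

lemma le_psi_of_le (ha₀ : 0 < a₀) (hX : Lpos P X) {y y' : ℝ} (h : y ≤ y') :
    Real.exp (-a₁ * (y' - y)) * psi P m a₀ a₁ X y ≤ psi P m a₀ a₁ X y' := by
  rw [psi_eq, psi_eq, ← integral_const_mul]
  refine integral_mono_ae ((integrable_psi P m ha₀ hX y).const_mul _)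
    (integrable_psi P m ha₀ hX y') ?_
  filter_upwards [ae_mem_weights m a₀ a₁] with a ha
  have h1 := phi_pos P hX (ha₀.le.trans ha.1)
  rw [mul_div_assoc', ← Real.exp_add]
  refine div_le_div_of_nonneg_right (Real.exp_le_exp.2 ?_) h1.le
  have := mul_le_mul_of_nonneg_right ha.2 (sub_nonneg.2 h)
  linarith

lemma strictAnti_psi (ha₀ : 0 < a₀) (hm : m (Icc a₀ a₁) = 1) (hX : Lpos P X) :
    StrictAnti (psi P m a₀ a₁ X) := by
  intro y y' h
  refine (psi_le_of_le P m ha₀ hX h.le).trans_lt ?_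
  refine mul_lt_of_lt_one_left (psi_pos P m ha₀ hm hX y) (Real.exp_lt_one_iff.2 ?_)
  nlinarith [mul_pos ha₀ (sub_pos.2 h)]

/-- The two exponential bounds squeeze `ψ_X(y')` between `ψ_X(y)` and `e^{-a₁(y'-y)} ψ_X(y)`. -/
lemma continuous_psi (ha₀ : 0 < a₀) (hm : m (Icc a₀ a₁) = 1) (hX : Lpos P X) :
    Continuous (psi P m a₀ a₁ X) := by
  rw [continuous_iff_continuousAt]
  intro y
  have hanti := (strictAnti_psi P m ha₀ hm hX).antitone
  have hc : Tendsto (fun y' => Real.exp (-a₁ * (y' - y)) * psi P m a₀ a₁ X y) (nhds y)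
      (nhds (psi P m a₀ a₁ X y)) := by
    have : Continuous (fun y' => Real.exp (-a₁ * (y' - y)) * psi P m a₀ a₁ X y) := by fun_prop
    simpa using this.tendsto y
  have hk : Tendsto (fun _ : ℝ => psi P m a₀ a₁ X y) (nhds y)
      (nhds (psi P m a₀ a₁ X y)) := tendsto_const_nhds
  have hlo := hc.min hk
  have hhi := hc.max hk
  rw [min_self] at hlo
  rw [max_self] at hhi
  refine tendsto_of_tendsto_of_tendsto_of_le_of_le hlo hhi ?_ ?_
  · intro y'
    rcases le_total y y' with h | h
    · exact (min_le_left _ _).trans (le_psi_of_le P m ha₀ hX h)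
    · exact (min_le_right _ _).trans (hanti h)
  · intro y'
    rcases le_total y y' with h | h
    · exact (hanti h).trans (le_max_right _ _)
    · refine le_trans ?_ (le_max_left _ _)
      have h2 := mul_le_mul_of_nonneg_left (le_psi_of_le P m (a₁ := a₁) ha₀ hX h)
        (Real.exp_pos (-a₁ * (y' - y))).le
      rw [← mul_assoc, ← Real.exp_add] at h2
      rwa [show -a₁ * (y' - y) + -a₁ * (y - y') = 0 by ring, Real.exp_zero, one_mul] at h2

lemma exists_psi_eq (ha₀ : 0 < a₀) (hm : m (Icc a₀ a₁) = 1) (hX : Lpos P X) {z : ℝ}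
    (hz : 0 < z) : ∃ y, psi P m a₀ a₁ X y = z := by
  have h0 := psi_pos P m ha₀ hm hX 0
  have hlin : ∀ c : ℝ, Tendsto (fun y : ℝ => Real.exp (-a₀ * y) * c) atTop (nhds (0 * c)) := by
    intro c
    refine Tendsto.mul_const c (Real.tendsto_exp_atBot.comp ?_)
    exact tendsto_id.const_mul_atTop_of_neg (neg_lt_zero.2 ha₀)
  obtain ⟨y₁, hy₁, hy₁'⟩ : ∃ y, psi P m a₀ a₁ X y ≤ z ∧ 0 ≤ y := by
    have := ((hlin (psi P m a₀ a₁ X 0)).eventually_lt_const (by simpa using hz)).and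
      (eventually_ge_atTop 0)
    obtain ⟨y, hy, hy0⟩ := this.exists
    refine ⟨y, ?_, hy0⟩
    have := psi_le_of_le P m (a₁ := a₁) ha₀ hX hy0
    rw [sub_zero] at this
    linarith
  obtain ⟨y₂, hy₂, hy₂'⟩ : ∃ y, z ≤ psi P m a₀ a₁ X y ∧ y ≤ 0 := by
    have := ((hlin z).eventually_lt_const (by simpa using h0)).and (eventually_ge_atTop 0)
    obtain ⟨y, hy, hy0⟩ := this.exists
    refine ⟨-y, ?_, by linarith⟩
    have h1 := psi_le_of_le P m (a₁ := a₁) ha₀ hX (show -y ≤ 0 by linarith)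
    rw [zero_sub, neg_neg] at h1
    exact le_of_mul_le_mul_left (hy.le.trans h1) (Real.exp_pos _)
  exact mem_range_of_exists_le_of_exists_ge (continuous_psi P m ha₀ hm hX) ⟨y₁, hy₁⟩ ⟨y₂, hy₂⟩

lemma psi_psiInv (ha₀ : 0 < a₀) (hm : m (Icc a₀ a₁) = 1) (hX : Lpos P X) {z : ℝ}
    (hz : 0 < z) : psi P m a₀ a₁ X (psiInv P m a₀ a₁ X z) = z := by
  obtain ⟨y, rfl⟩ := exists_psi_eq P m ha₀ hm hX hz
  have : {y' : ℝ | psi P m a₀ a₁ X y ≤ psi P m a₀ a₁ X y'} = Iic y := by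
    ext y'
    exact (strictAnti_psi P m ha₀ hm hX).le_iff_ge
  rw [psiInv, this, csSup_Iic]

lemma psiInv_le_iff (ha₀ : 0 < a₀) (hm : m (Icc a₀ a₁) = 1) (hX : Lpos P X) {z y : ℝ}
    (hz : 0 < z) : psiInv P m a₀ a₁ X z ≤ y ↔ psi P m a₀ a₁ X y ≤ z := by
  rw [← (strictAnti_psi P m ha₀ hm hX).le_iff_ge, psi_psiInv P m ha₀ hm hX hz]

lemma psi_mono_payoff (ha₀ : 0 < a₀) (hX : Lpos P X) (hY : Lpos P Y) (hXY : X ≤ᵐ[P] Y) (y : ℝ) :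
    psi P m a₀ a₁ X y ≤ psi P m a₀ a₁ Y y := by
  refine integral_mono_ae (integrable_psi P m ha₀ hX y) (integrable_psi P m ha₀ hY y) ?_
  filter_upwards [ae_mem_weights m a₀ a₁] with a ha
  have h1 := phi_pos P hY (ha₀.le.trans ha.1)
  exact div_le_div_of_nonneg_left (Real.exp_pos _).le h1
    (phi_anti_payoff P hX hY hXY (ha₀.le.trans ha.1))

/-- Monotonicity of `𝐓`, pointwise in `ω`: for `X ≤ Y`, any level `y ≥ 0` with `ψ_Y(y) ≤ λρ(ω)`
bounds `𝐓X(ω)`. With `y = 𝐓Y(ω)` this is `𝐓X ≤ 𝐓Y`; with `y = Y(ω)` it bounds `𝐓X` by any `Y ≥ X`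
satisfying the first-order inequality. -/
lemma Ttrans_le (ha₀ : 0 < a₀) (hm : m (Icc a₀ a₁) = 1) {lam : ℝ} {ρ : Ω → ℝ}
    (hX : Lpos P X) (hY : Lpos P Y) (hXY : X ≤ᵐ[P] Y) {ω : Ω} (hρ : 0 < lam * ρ ω)
    {y : ℝ} (hy : 0 ≤ y) (h : psi P m a₀ a₁ Y y ≤ lam * ρ ω) :
    Ttrans P m a₀ a₁ lam ρ X ω ≤ y :=
  max_le ((psiInv_le_iff P m ha₀ hm hX hρ).2 ((psi_mono_payoff P m ha₀ hX hY hXY y).trans h)) hy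

lemma psi_Ttrans_le (ha₀ : 0 < a₀) (hm : m (Icc a₀ a₁) = 1) {lam : ℝ} {ρ : Ω → ℝ}
    (hX : Lpos P X) {ω : Ω} (hρ : 0 < lam * ρ ω) :
    psi P m a₀ a₁ X (Ttrans P m a₀ a₁ lam ρ X ω) ≤ lam * ρ ω :=
  (psiInv_le_iff P m ha₀ hm hX hρ).1 (le_max_left _ _)

lemma psi_Ttrans_eq (ha₀ : 0 < a₀) (hm : m (Icc a₀ a₁) = 1) {lam : ℝ} {ρ : Ω → ℝ}
    (hX : Lpos P X) {ω : Ω} (hρ : 0 < lam * ρ ω) (hpos : 0 < Ttrans P m a₀ a₁ lam ρ X ω) :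
    psi P m a₀ a₁ X (Ttrans P m a₀ a₁ lam ρ X ω) = lam * ρ ω := by
  have : Ttrans P m a₀ a₁ lam ρ X ω = psiInv P m a₀ a₁ X (lam * ρ ω) := by
    unfold Ttrans at hpos ⊢
    exact max_eq_left (by by_contra! h; rw [max_eq_right h.le] at hpos; exact lt_irrefl _ hpos)
  rw [this, psi_psiInv P m ha₀ hm hX hρ]

lemma Lpos_Ttrans (ha₀ : 0 < a₀) (hm : m (Icc a₀ a₁) = 1) {lam : ℝ} {ρ : Ω → ℝ}
    (hmρ : Measurable ρ) (hX : Lpos P X) : Lpos P (Ttrans P m a₀ a₁ lam ρ X) := by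
  refine ⟨?_, Eventually.of_forall fun ω => le_max_right _ _⟩
  -- The junk value of `psiInv` at `z ≤ 0` destroys monotonicity, so measurability is read off
  -- from the sublevel sets.
  refine Measurable.max ?_ measurable_const
  refine Measurable.comp (g := psiInv P m a₀ a₁ X) ?_ (by fun_prop)
  have hψ := (strictAnti_psi P m ha₀ hm hX)
  refine measurable_of_Iic fun y => ?_
  have : psiInv P m a₀ a₁ X ⁻¹' Iic y =
      (Ioi 0 ∩ Ici (psi P m a₀ a₁ X y)) ∪ (Iic 0 ∩ {_z | 0 ≤ y}) := by
    ext z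
    rcases lt_or_ge 0 z with hz | hz
    · simp [psiInv_le_iff P m ha₀ hm hX hz, hz]
    · have : {y : ℝ | z ≤ psi P m a₀ a₁ X y} = univ :=
        eq_univ_of_forall fun y => hz.trans (psi_pos P m ha₀ hm hX y).le
      simp [psiInv, this, hz]
  rw [this]
  exact (measurableSet_Ioi.inter measurableSet_Ici).union
    (measurableSet_Iic.inter (MeasurableSet.const _))

end psi

/-! ### The subgradient inequality for `h` -/

/-- Fubini for the kernel `e^{-aX}/φ_X(a)`, which has `P`-mean one for each `a`. -/
lemma tilt_fubini (P : Measure Ω) [IsProbabilityMeasure P] (m : Measure ℝ)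
    [IsFiniteMeasure m] {a₀ a₁ : ℝ} (ha₀ : 0 < a₀) {X : Ω → ℝ} (hX : Lpos P X)
    {u : ℝ → ℝ} (hu : Integrable u (m.restrict (Icc a₀ a₁))) :
    Integrable (fun p : Ω × ℝ => Real.exp (-p.2 * X p.1) / phi P X p.2 * u p.2)
      (P.prod (m.restrict (Icc a₀ a₁))) ∧
    ∫ ω, ∫ a in Icc a₀ a₁, Real.exp (-a * X ω) / phi P X a * u a ∂m ∂P =
      ∫ a in Icc a₀ a₁, u a ∂m := by
  have hφ := measurable_phi P hX.1
  have hXm := hX.1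
  have hint : Integrable (fun p : Ω × ℝ => Real.exp (-p.2 * X p.1) / phi P X p.2 * u p.2)
      (P.prod (m.restrict (Icc a₀ a₁))) := by
    refine (hu.comp_snd P).bdd_mul (c := 1 / phi P X a₁)
      (Measurable.aestronglyMeasurable (by fun_prop)) ?_
    filter_upwards [Measure.quasiMeasurePreserving_fst.ae hX.2,
      Measure.quasiMeasurePreserving_snd.ae (ae_mem_weights m a₀ a₁)] with p h1 h2
    have ha' : 0 < p.2 := ha₀.trans_le h2.1
    have h3 := phi_pos P hX ha'.le
    have h4 := phi_pos P hX (ha'.le.trans h2.2)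
    rw [Real.norm_of_nonneg (by positivity)]
    refine div_le_div₀ zero_le_one ?_ h4 (phi_anti P hX ha'.le h2.2)
    rw [Real.exp_le_one_iff]
    nlinarith [mul_nonneg ha'.le h1]
  refine ⟨hint, ?_⟩
  rw [integral_integral_swap hint]
  refine integral_congr_ae ?_
  filter_upwards [ae_mem_weights m a₀ a₁] with a ha
  have h3 := phi_pos P hX (ha₀.le.trans ha.1)
  rw [integral_mul_const, integral_div]
  change phi P X a / phi P X a * u a = u a
  rw [div_self h3.ne', one_mul]

/-- Subgradient inequality `h(X) - h(Y) ≤ E[ψ_X(X)(Y - X)]`, with the right-hand side replaced by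
any integrable upper bound, so that `ψ_X(X)(Y - X)` itself need not be integrable. -/
lemma werm_sub_le (P : Measure Ω) [IsProbabilityMeasure P] (m : Measure ℝ)
    [IsProbabilityMeasure m] {a₀ a₁ : ℝ} (ha₀ : 0 < a₀) {X Y : Ω → ℝ} (hX : Lpos P X)
    (hY : Lpos P Y) {G : Ω → ℝ} (hG : Integrable G P)
    (h : ∀ᵐ ω ∂P, psi P m a₀ a₁ X (X ω) * (Y ω - X ω) ≤ G ω) :
    werm P m a₀ a₁ X - werm P m a₀ a₁ Y ≤ ∫ ω, G ω ∂P := by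
  have hv := integrable_one_div m (a₁ := a₁) ha₀
  have hhX := integrable_entropic P m (a₁ := a₁) ha₀ hX
  have hhY := integrable_entropic P m (a₁ := a₁) ha₀ hY
  have hu : Integrable (fun a => 1 / a + (entropic P a X - entropic P a Y))
      (m.restrict (Icc a₀ a₁)) := hv.add (hhX.sub hhY)
  obtain ⟨i1, e1⟩ := tilt_fubini P m ha₀ hX hu
  obtain ⟨i2, e2⟩ := tilt_fubini P m ha₀ hY hv
  have key : ∫ ω, ((∫ a in Icc a₀ a₁, Real.exp (-a * X ω) / phi P X a *
        (1 / a + (entropic P a X - entropic P a Y)) ∂m) -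
      ∫ a in Icc a₀ a₁, Real.exp (-a * Y ω) / phi P Y a * (1 / a) ∂m) ∂P ≤ ∫ ω, G ω ∂P := by
    refine integral_mono_ae (i1.integral_prod_left.sub i2.integral_prod_left) hG ?_
    filter_upwards [h, i1.prod_right_ae, i2.prod_right_ae] with ω hω j1 j2
    refine le_trans ?_ hω
    rw [psi_eq, ← integral_mul_const, ← integral_sub j1 j2]
    refine integral_mono_ae (j1.sub j2) ((integrable_psi P m ha₀ hX (X ω)).mul_const _) ?_
    filter_upwards [ae_mem_weights m a₀ a₁] with a ha
    have ha' : 0 < a := ha₀.trans_le ha.1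
    have hp := phi_pos P hX ha'.le
    have hq := phi_pos P hY ha'.le
    change Real.exp (-a * X ω) / phi P X a *
        (1 / a + (1 / a * Real.log (phi P X a) - 1 / a * Real.log (phi P Y a))) -
        Real.exp (-a * Y ω) / phi P Y a * (1 / a)
      ≤ Real.exp (-a * X ω) / phi P X a * (Y ω - X ω)
    -- `e^t ≥ 1 + t` at `t = -a(Y-X) - log(φ_Y/φ_X)`, multiplied by `e^{-aX}/φ_X`.
    have h1 := Real.add_one_le_exp
      (-a * (Y ω - X ω) + (Real.log (phi P X a) - Real.log (phi P Y a)))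
    have h2 : Real.exp (-a * Y ω) / phi P Y a = Real.exp (-a * X ω) / phi P X a *
        Real.exp (-a * (Y ω - X ω) + (Real.log (phi P X a) - Real.log (phi P Y a))) := by
      rw [Real.exp_add, Real.exp_sub, Real.exp_log hp, Real.exp_log hq,
        show -a * Y ω = -a * X ω + -a * (Y ω - X ω) by ring, Real.exp_add]
      field_simp
    have hf : 0 ≤ Real.exp (-a * X ω) / phi P X a * (1 / a) := by positivity
    have h3 := mul_le_mul_of_nonneg_left h1 hf
    rw [h2]
    have h4 : (1 / a) * a = 1 := by field_simp
    generalize Real.exp (-a * X ω) / phi P X a = f at *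
    generalize 1 / a = b at *
    linear_combination h3 + f * (Y ω - X ω) * h4
  have e3 : ∫ a in Icc a₀ a₁, 1 / a + (entropic P a X - entropic P a Y) ∂m =
      (∫ a in Icc a₀ a₁, 1 / a ∂m) + (werm P m a₀ a₁ X - werm P m a₀ a₁ Y) := by
    rw [werm, werm, ← integral_sub hhX hhY]
    exact integral_add hv (hhX.sub hhY)
  rw [integral_sub i1.integral_prod_left i2.integral_prod_left, e1, e2, e3] at key
  linarith

/-! ### Passing to the limit in `ψ` -/

/-- Continuity of `(X, y) ↦ ψ_X(y)` along payoffs converging a.s. from below. -/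
lemma tendsto_psi (P : Measure Ω) [IsProbabilityMeasure P] (m : Measure ℝ)
    [IsProbabilityMeasure m] {a₀ a₁ : ℝ} (ha₀ : 0 < a₀) {X : Ω → ℝ} {Xs : ℕ → Ω → ℝ}
    (hX : Lpos P X) (hXs : ∀ n, Lpos P (Xs n)) (hle : ∀ n, Xs n ≤ᵐ[P] X)
    (hlim : ∀ᵐ ω ∂P, Tendsto (fun n => Xs n ω) atTop (nhds (X ω)))
    {ys : ℕ → ℝ} {y : ℝ} (hys : ∀ n, 0 ≤ ys n) (hy : Tendsto ys atTop (nhds y)) :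
    Tendsto (fun n => psi P m a₀ a₁ (Xs n) (ys n)) atTop (nhds (psi P m a₀ a₁ X y)) := by
  have hφ : ∀ a, 0 ≤ a → Tendsto (fun n => phi P (Xs n) a) atTop (nhds (phi P X a)) := by
    intro a ha
    refine tendsto_integral_of_dominated_convergence (fun _ => (1 : ℝ))
      (fun n => (integrable_exp P (hXs n) ha).aestronglyMeasurable) (integrable_const _) ?_ ?_
    · intro n
      filter_upwards [(hXs n).2] with ω h
      rw [Real.norm_eq_abs, Real.abs_exp, Real.exp_le_one_iff]
      nlinarith [mul_nonneg ha h]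
    · filter_upwards [hlim] with ω h
      exact (Real.continuous_exp.tendsto _).comp (h.const_mul (-a))
  simp only [psi_eq]
  refine tendsto_integral_of_dominated_convergence (fun _ => 1 / phi P X a₁)
    (fun n => (integrable_psi P m ha₀ (hXs n) (ys n)).aestronglyMeasurable)
    (integrable_const _) ?_ ?_
  · intro n
    filter_upwards [ae_mem_weights m a₀ a₁] with a ha
    have ha' : 0 < a := ha₀.trans_le ha.1
    have h1 := phi_pos P (hXs n) ha'.le
    have h2 := phi_pos P hX (ha'.le.trans ha.2)
    rw [Real.norm_of_nonneg (by positivity)]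
    refine div_le_div₀ zero_le_one ?_ h2
      ((phi_anti P hX ha'.le ha.2).trans (phi_anti_payoff P (hXs n) hX (hle n) ha'.le))
    rw [Real.exp_le_one_iff]
    nlinarith [mul_nonneg ha'.le (hys n)]
  · filter_upwards [ae_mem_weights m a₀ a₁] with a ha
    have ha' : 0 < a := ha₀.trans_le ha.1
    exact ((Real.continuous_exp.tendsto _).comp (hy.const_mul (-a))).div (hφ a ha'.le)
      (phi_pos P hX ha'.le).ne'

/-! ### First-order conditions for the minimization problem -/

lemma robj_eq_top (P : Measure Ω) (m : Measure ℝ) (a₀ a₁ : ℝ) (ρ : Ω → ℝ) {lam : ℝ}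
    (hlam : 0 < lam) {X : Ω → ℝ} (h : budget P ρ X = ⊤) : robj P m a₀ a₁ ρ lam X = ⊤ := by
  rw [robj, h, EReal.coe_ennreal_top, EReal.coe_mul_top_of_pos hlam, EReal.coe_add_top]

lemma ae_mul_nonneg {P : Measure Ω} {ρ X : Ω → ℝ} (hρ0 : ∀ᵐ ω ∂P, 0 < ρ ω) (hX : Lpos P X) :
    0 ≤ᵐ[P] fun ω => ρ ω * X ω := by
  filter_upwards [hρ0, hX.2] with ω h1 h2 using mul_nonneg h1.le h2

lemma integrable_of_budget {P : Measure Ω} {ρ X : Ω → ℝ} (hmρ : Measurable ρ)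
    (hρ0 : ∀ᵐ ω ∂P, 0 < ρ ω) (hX : Lpos P X) (h : budget P ρ X ≠ ⊤) :
    Integrable (fun ω => ρ ω * X ω) P :=
  (lintegral_ofReal_ne_top_iff_integrable (hmρ.mul hX.1).aestronglyMeasurable
    (ae_mul_nonneg hρ0 hX)).1 h

lemma budget_of_integrable {P : Measure Ω} {ρ X : Ω → ℝ}
    (hρ0 : ∀ᵐ ω ∂P, 0 < ρ ω) (hX : Lpos P X) (h : Integrable (fun ω => ρ ω * X ω) P) :
    budget P ρ X = ENNReal.ofReal (∫ ω, ρ ω * X ω ∂P) :=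
  (ofReal_integral_eq_lintegral_ofReal h (ae_mul_nonneg hρ0 hX)).symm

lemma robj_of_integrable {P : Measure Ω} {ρ X : Ω → ℝ} (m : Measure ℝ) (a₀ a₁ lam : ℝ)
    (hρ0 : ∀ᵐ ω ∂P, 0 < ρ ω) (hX : Lpos P X) (h : Integrable (fun ω => ρ ω * X ω) P) :
    robj P m a₀ a₁ ρ lam X =
      ((werm P m a₀ a₁ X + lam * ∫ ω, ρ ω * X ω ∂P : ℝ) : EReal) := by
  rw [robj, budget_of_integrable hρ0 hX h, EReal.coe_ennreal_ofReal,
    max_eq_left (integral_nonneg_of_ae (ae_mul_nonneg hρ0 hX))]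
  push_cast
  rfl

/-- First-order condition, sufficiency: if `ψ_X(X) ≤ λρ` with equality on `{X > 0}`, then
`ψ_X(X)(Y - X) ≤ λρ(Y - X)` for every `Y ≥ 0`, and the subgradient inequality applies. -/
lemma optimal_of_foc (P : Measure Ω) [IsProbabilityMeasure P] (m : Measure ℝ)
    [IsProbabilityMeasure m] {a₀ a₁ : ℝ} (ha₀ : 0 < a₀) {ρ : Ω → ℝ} (hmρ : Measurable ρ)
    (hρ0 : ∀ᵐ ω ∂P, 0 < ρ ω) {lam : ℝ} (hlam : 0 < lam) {X : Ω → ℝ} (hX : Lpos P X)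
    (hb : budget P ρ X ≠ ⊤)
    (hfoc : ∀ᵐ ω ∂P, psi P m a₀ a₁ X (X ω) ≤ lam * ρ ω ∧
      (0 < X ω → psi P m a₀ a₁ X (X ω) = lam * ρ ω)) {Y : Ω → ℝ} (hY : Lpos P Y) :
    robj P m a₀ a₁ ρ lam X ≤ robj P m a₀ a₁ ρ lam Y := by
  by_cases hYb : budget P ρ Y = ⊤
  · rw [robj_eq_top P m a₀ a₁ ρ hlam hYb]
    exact le_top
  have iX := integrable_of_budget hmρ hρ0 hX hb
  have iY := integrable_of_budget hmρ hρ0 hY hYb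
  rw [robj_of_integrable m a₀ a₁ lam hρ0 hX iX, robj_of_integrable m a₀ a₁ lam hρ0 hY iY,
    EReal.coe_le_coe_iff]
  have := werm_sub_le P m (a₁ := a₁) ha₀ hX hY ((iY.sub iX).const_mul lam) (by
    filter_upwards [hfoc, hX.2, hY.2] with ω h1 h2 h3
    change _ ≤ lam * (ρ ω * Y ω - ρ ω * X ω)
    rw [← mul_sub, ← mul_assoc]
    rcases h2.eq_or_lt with h | h
    · exact mul_le_mul_of_nonneg_right h1.1 (by linarith)
    · rw [h1.2 h])
  rw [integral_const_mul] at this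
  have e : ∫ ω, ((fun ω => ρ ω * Y ω) - fun ω => ρ ω * X ω) ω ∂P =
      ∫ ω, ρ ω * Y ω ∂P - ∫ ω, ρ ω * X ω ∂P := integral_sub iY iX
  rw [e] at this
  linarith

lemma optimal_budget (P : Measure Ω) [IsProbabilityMeasure P] (m : Measure ℝ)
    {a₀ a₁ : ℝ} {ρ : Ω → ℝ} {lam : ℝ} (hlam : 0 < lam) {X : Ω → ℝ}
    (hopt : ∀ Y, Lpos P Y → robj P m a₀ a₁ ρ lam X ≤ robj P m a₀ a₁ ρ lam Y) :
    budget P ρ X ≠ ⊤ := by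
  intro h
  have h0 := hopt (fun _ => 0) ⟨measurable_const, Eventually.of_forall fun _ => le_rfl⟩
  rw [robj_eq_top P m a₀ a₁ ρ hlam h, top_le_iff, robj] at h0
  simp [budget] at h0

/-- First-order condition, necessity: a minimizer satisfies `ψ_X(X) ≤ λρ` a.s. Otherwise adding
a small constant on `{ψ_X(X) > λρ}` lowers the objective. -/
lemma foc_of_optimal (P : Measure Ω) [IsProbabilityMeasure P] (m : Measure ℝ)
    [IsProbabilityMeasure m] {a₀ a₁ : ℝ} (ha₀ : 0 < a₀) (hm : m (Icc a₀ a₁) = 1)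
    {ρ : Ω → ℝ} (hmρ : Measurable ρ) (hρ0 : ∀ᵐ ω ∂P, 0 < ρ ω) (hρint : Integrable ρ P)
    {lam : ℝ} (hlam : 0 < lam) {X : Ω → ℝ} (hX : Lpos P X)
    (hopt : ∀ Y, Lpos P Y → robj P m a₀ a₁ ρ lam X ≤ robj P m a₀ a₁ ρ lam Y) :
    ∀ᵐ ω ∂P, psi P m a₀ a₁ X (X ω) ≤ lam * ρ ω := by
  have iX := integrable_of_budget hmρ hρ0 hX (optimal_budget P m hlam hopt)
  have hψm : Measurable (fun ω => psi P m a₀ a₁ X (X ω)) :=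
    (continuous_psi P m ha₀ hm hX).measurable.comp hX.1
  set A : Set Ω := {ω | lam * ρ ω < psi P m a₀ a₁ X (X ω)} with hA
  have hAm : MeasurableSet A := measurableSet_lt (by fun_prop) hψm
  have iψ : Integrable (fun ω => psi P m a₀ a₁ X (X ω)) P := by
    refine Integrable.of_bound (C := psi P m a₀ a₁ X 0) hψm.aestronglyMeasurable ?_
    filter_upwards [hX.2] with ω h
    rw [Real.norm_of_nonneg (psi_pos P m ha₀ hm hX _).le]
    exact (strictAnti_psi P m ha₀ hm hX).antitone h
  have iψA := iψ.indicator hAm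
  have iρA := hρint.indicator hAm
  have step : ∀ ε : ℝ, 0 < ε → Real.exp (-a₁ * ε) *
      ∫ ω, A.indicator (fun ω => psi P m a₀ a₁ X (X ω)) ω ∂P ≤
      lam * ∫ ω, A.indicator ρ ω ∂P := by
    intro ε hε
    set Y : Ω → ℝ := fun ω => X ω + A.indicator (fun _ => ε) ω with hYdef
    have hind : ∀ ω, 0 ≤ A.indicator (fun _ => ε) ω := indicator_nonneg fun _ _ => hε.le
    have hXY : X ≤ᵐ[P] Y := Eventually.of_forall fun ω => by
      have := hind ω
      change X ω ≤ X ω + _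
      linarith
    have hY : Lpos P Y := by
      refine ⟨hX.1.add (measurable_const.indicator hAm), ?_⟩
      filter_upwards [hX.2, hXY] with ω h1 h2 using h1.trans h2
    have hρY : (fun ω => ρ ω * Y ω) = fun ω => ρ ω * X ω + ε * A.indicator ρ ω := by
      funext ω
      by_cases h : ω ∈ A
      · simp [hYdef, h]
        ring
      · simp [hYdef, h]
    have iY : Integrable (fun ω => ρ ω * Y ω) P := by
      rw [hρY]
      exact iX.add (iρA.const_mul ε)
    have h1 := hopt Y hY
    rw [robj_of_integrable m a₀ a₁ lam hρ0 hX iX, robj_of_integrable m a₀ a₁ lam hρ0 hY iY,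
      EReal.coe_le_coe_iff, hρY, integral_add iX (iρA.const_mul ε), integral_const_mul] at h1
    -- The subgradient inequality at `Y`, using `ψ_Y(Y) ≥ e^{-a₁ε} ψ_X(X)` on `A`.
    have h2 := werm_sub_le P m (a₁ := a₁) ha₀ hY hX (iψA.const_mul (-ε * Real.exp (-a₁ * ε)))
      (Eventually.of_forall fun ω => by
        by_cases h : ω ∈ A
        · have e1 : Y ω = X ω + ε := by simp [hYdef, h]
          have e2 := le_psi_of_le P m (a₁ := a₁) ha₀ hX (show X ω ≤ X ω + ε by linarith)
          have e3 := psi_mono_payoff P m (a₁ := a₁) ha₀ hX hY hXY (X ω + ε)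
          rw [add_sub_cancel_left] at e2
          rw [indicator_of_mem h, e1]
          have := mul_le_mul_of_nonneg_left (e2.trans e3) hε.le
          linarith
        · have e1 : Y ω = X ω := by simp [hYdef, h]
          simp [indicator_of_notMem h, e1])
    rw [integral_const_mul] at h2
    have h3 : ε * (Real.exp (-a₁ * ε) *
        ∫ ω, A.indicator (fun ω => psi P m a₀ a₁ X (X ω)) ω ∂P) ≤
        ε * (lam * ∫ ω, A.indicator ρ ω ∂P) := by linarith
    exact le_of_mul_le_mul_left h3 hε
  have hlimit : ∫ ω, A.indicator (fun ω => psi P m a₀ a₁ X (X ω)) ω ∂P ≤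
      lam * ∫ ω, A.indicator ρ ω ∂P := by
    have hc : Tendsto (fun ε : ℝ => Real.exp (-a₁ * ε) *
        ∫ ω, A.indicator (fun ω => psi P m a₀ a₁ X (X ω)) ω ∂P) (nhdsWithin 0 (Ioi 0))
        (nhds (Real.exp (-a₁ * 0) *
          ∫ ω, A.indicator (fun ω => psi P m a₀ a₁ X (X ω)) ω ∂P)) :=
      tendsto_nhdsWithin_of_tendsto_nhds (Continuous.tendsto (by fun_prop) 0)
    have := le_of_tendsto hc (eventually_nhdsWithin_of_forall step)
    simpa using this
  -- `ψ_X(X) - λρ` restricted to `A` is nonnegative with nonpositive mean, hence vanishes a.s.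
  have hnn : ∀ ω, 0 ≤ A.indicator (fun ω => psi P m a₀ a₁ X (X ω)) ω - lam * A.indicator ρ ω := by
    intro ω
    by_cases h : ω ∈ A
    · simpa [h] using (show lam * ρ ω < _ from h).le
    · simp [h]
  have hzero : ∫ ω, (A.indicator (fun ω => psi P m a₀ a₁ X (X ω)) ω
      - lam * A.indicator ρ ω) ∂P = 0 := by
    refine le_antisymm ?_ (integral_nonneg hnn)
    rw [integral_sub iψA (iρA.const_mul lam), integral_const_mul]
    linarith
  rw [integral_eq_zero_iff_of_nonneg hnn (iψA.sub (iρA.const_mul lam))] at hzero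
  filter_upwards [hzero] with ω h
  by_contra! hlt
  have hω : ω ∈ A := hlt
  simp only [indicator_of_mem hω, Pi.zero_apply] at h
  linarith

/-! ### The iteration -/

/-- with `X₀ ≡ 0` and `X_{n+1} = 𝐓Xₙ`, the sequence is a.s. nondecreasing
(hence `Xₙ ↗ X_∞ := ⨆ n Xₙ`, a `[0,∞]`-valued random variable); the problem of minimizing
`h(X) + λ E[ρX]` over `L⁰₊` has a solution iff `E[ρ X_∞] < ∞`, in which case `X_∞` is a
solution. -/
theorem risk_minimization_iteration (P : Measure Ω) [IsProbabilityMeasure P]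
    (a₀ a₁ : ℝ) (ha₀ : 0 < a₀) (ha₀₁ : a₀ < a₁)
    (m : Measure ℝ) [IsProbabilityMeasure m] (hm : m (Set.Icc a₀ a₁) = 1)
    (ρ : Ω → ℝ) (hmρ : Measurable ρ) (hρ0 : ∀ᵐ ω ∂P, 0 < ρ ω) (hρint : Integrable ρ P)
    (lam : ℝ) (hlam : 0 < lam)
    (Xseq : ℕ → Ω → ℝ)
    (hseq0 : Xseq 0 = fun _ => 0)
    (hseqrec : ∀ n, Xseq (n + 1) = Ttrans P m a₀ a₁ lam ρ (Xseq n)) :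
    (∀ᵐ ω ∂P, ∀ n, Xseq n ω ≤ Xseq (n + 1) ω) ∧
    ((∃ X, Lpos P X ∧
        ∀ Y, Lpos P Y → robj P m a₀ a₁ ρ lam X ≤ robj P m a₀ a₁ ρ lam Y) ↔
      (∫⁻ ω, ENNReal.ofReal (ρ ω) * (⨆ n, ENNReal.ofReal (Xseq n ω)) ∂P) < ⊤) ∧
    ((∫⁻ ω, ENNReal.ofReal (ρ ω) * (⨆ n, ENNReal.ofReal (Xseq n ω)) ∂P) < ⊤ →
      (Lpos P (fun ω => (⨆ n, ENNReal.ofReal (Xseq n ω)).toReal) ∧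
        ∀ Y, Lpos P Y →
          robj P m a₀ a₁ ρ lam (fun ω => (⨆ n, ENNReal.ofReal (Xseq n ω)).toReal)
            ≤ robj P m a₀ a₁ ρ lam Y)) := by
  have hL : ∀ n, Lpos P (Xseq n) := by
    intro n
    induction n with
    | zero => rw [hseq0]; exact ⟨measurable_const, Eventually.of_forall fun _ => le_rfl⟩
    | succ n ih => rw [hseqrec]; exact Lpos_Ttrans P m ha₀ hm hmρ ih
  have hnn : ∀ n ω, 0 ≤ Xseq n ω := by
    intro n ω
    cases n with
    | zero => rw [hseq0]
    | succ n => rw [hseqrec]; exact le_max_right _ _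
  have hz : ∀ᵐ ω ∂P, 0 < lam * ρ ω := hρ0.mono fun ω h => mul_pos hlam h
  have hstep : ∀ n, Xseq n ≤ᵐ[P] Xseq (n + 1) := by
    intro n
    induction n with
    | zero => exact Eventually.of_forall fun ω => by rw [hseq0]; exact hnn 1 ω
    | succ n ih =>
      filter_upwards [hz] with ω hω
      rw [hseqrec n]
      refine Ttrans_le P m ha₀ hm (hL n) (hL (n + 1)) ih hω (hnn _ ω) ?_
      rw [hseqrec (n + 1)]
      exact psi_Ttrans_le P m ha₀ hm (hL (n + 1)) hω
  have hmono : ∀ᵐ ω ∂P, ∀ n, Xseq n ω ≤ Xseq (n + 1) ω := ae_all_iff.2 hstep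
  have hfin : (∫⁻ ω, ENNReal.ofReal (ρ ω) * (⨆ n, ENNReal.ofReal (Xseq n ω)) ∂P) < ⊤ →
      (Lpos P (fun ω => (⨆ n, ENNReal.ofReal (Xseq n ω)).toReal) ∧
        ∀ Y, Lpos P Y →
          robj P m a₀ a₁ ρ lam (fun ω => (⨆ n, ENNReal.ofReal (Xseq n ω)).toReal)
            ≤ robj P m a₀ a₁ ρ lam Y) := by
    intro hlt
    have hSm : Measurable (fun ω => ⨆ n, ENNReal.ofReal (Xseq n ω)) :=
      Measurable.iSup fun n => (hL n).1.ennreal_ofReal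
    have hSfin : ∀ᵐ ω ∂P, (⨆ n, ENNReal.ofReal (Xseq n ω)) ≠ ⊤ := by
      filter_upwards [ae_lt_top (hmρ.ennreal_ofReal.mul hSm) hlt.ne, hρ0] with ω h1 h2 h3
      simp only [Pi.mul_apply] at h1
      rw [h3, ENNReal.mul_top (ENNReal.ofReal_pos.2 h2).ne'] at h1
      exact lt_irrefl _ h1
    set X : Ω → ℝ := fun ω => (⨆ n, ENNReal.ofReal (Xseq n ω)).toReal with hXdef
    have hX : Lpos P X :=
      ⟨hSm.ennreal_toReal, Eventually.of_forall fun ω => ENNReal.toReal_nonneg⟩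
    have hle : ∀ᵐ ω ∂P, ∀ n, Xseq n ω ≤ X ω := by
      filter_upwards [hSfin] with ω h n
      exact (ENNReal.ofReal_le_iff_le_toReal h).1 (le_iSup (fun n => ENNReal.ofReal (Xseq n ω)) n)
    have hlim : ∀ᵐ ω ∂P, Tendsto (fun n => Xseq n ω) atTop (nhds (X ω)) := by
      filter_upwards [hSfin, hmono] with ω h h'
      have h1 : Monotone fun n => ENNReal.ofReal (Xseq n ω) :=
        fun i j hij => ENNReal.ofReal_le_ofReal (monotone_nat_of_le_succ h' hij)
      have h2 := (ENNReal.tendsto_toReal h).comp (tendsto_atTop_iSup h1)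
      exact h2.congr fun n => ENNReal.toReal_ofReal (hnn n ω)
    refine ⟨hX, fun Y hY => optimal_of_foc P m ha₀ hmρ hρ0 hlam hX ?_ ?_ hY⟩
    · have : budget P ρ X =
          ∫⁻ ω, ENNReal.ofReal (ρ ω) * (⨆ n, ENNReal.ofReal (Xseq n ω)) ∂P := by
        refine lintegral_congr_ae ?_
        filter_upwards [hSfin, hρ0] with ω h1 h2
        rw [ENNReal.ofReal_mul h2.le, ENNReal.ofReal_toReal h1]
      rw [this]
      exact hlt.ne
    · -- Passing to the limit in `ψ_{Xₙ}(Xₙ₊₁) ≤ λρ`, an equality once `Xₙ₊₁ > 0`.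
      filter_upwards [hlim, hz] with ω h1 h2
      have h1' : Tendsto (fun n => Xseq (n + 1) ω) atTop (nhds (X ω)) :=
        h1.comp (tendsto_add_atTop_nat 1)
      have ht := tendsto_psi P m (a₁ := a₁) ha₀ hX hL
        (fun n => hle.mono fun ω h => h n) hlim (fun n => hnn (n + 1) ω) h1'
      constructor
      · refine le_of_tendsto' ht fun n => ?_
        rw [hseqrec n]
        exact psi_Ttrans_le P m ha₀ hm (hL n) h2
      · intro hpos
        refine tendsto_nhds_unique ht (tendsto_const_nhds.congr' ?_)
        filter_upwards [h1'.eventually_const_lt hpos] with n hn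
        rw [hseqrec n] at hn ⊢
        exact (psi_Ttrans_eq P m ha₀ hm (hL n) h2 hn).symm
  refine ⟨hmono, ⟨?_, fun h => ⟨_, hfin h⟩⟩, hfin⟩
  rintro ⟨X, hX, hopt⟩
  have hfoc := foc_of_optimal P m ha₀ hm hmρ hρ0 hρint hlam hX hopt
  -- Every iterate lies below the minimizer, hence so does the limit.
  have hdom : ∀ n, Xseq n ≤ᵐ[P] X := by
    intro n
    induction n with
    | zero => rw [hseq0]; exact hX.2
    | succ n ih =>
      filter_upwards [hfoc, hz, hX.2] with ω h1 h2 h3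
      rw [hseqrec n]
      exact Ttrans_le P m ha₀ hm (hL n) hX ih h2 h3 h1
  refine lt_of_le_of_lt (lintegral_mono_ae ?_) (lt_top_iff_ne_top.2 (optimal_budget P m hlam hopt))
  filter_upwards [ae_all_iff.2 hdom, hρ0] with ω h1 h2
  rw [ENNReal.ofReal_mul h2.le]
  gcongr
  exact iSup_le fun n => ENNReal.ofReal_le_ofReal (h1 n)
end
end

section
/- Fix x > 0 and μ > 0. Then X* ∈ L⁰₊ solves the problem — maximize E[U(X)] − μ·h(X) over X ∈ L⁰₊ subject to E[ρX] ≤ x — if and only if there exists λ* > 0 such that (i) X* maximizes E[U(X)] − μ·h(X) − λ*·E[ρX] over X ∈ L⁰₊ and (ii) E[ρX*] = x. Moreover, in that case λ* is a supergradient of the value function v_μ at x: v_μ(y) ≤ v_μ(x) + λ*·(y − x) for all y > 0. -/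
/-!
The theorem is Lagrange duality for one linear constraint, reduced to separating two families of
slopes on the line.

*Reduction to real numbers.* `U` is monotone, concave and bounded below by `U 0` on `[0, ∞)`, so
`E[U(Y)]` is an integral or `⊤`. A payoff of finite price can be scaled down into the budget set on
which the expected-utility value is finite, and concavity then makes its utility integrable
(`utility_integrable`). On payoffs of finite price (`Adm`) the objective is therefore a real number
`G(Y)` and the price a real number `b(Y)`, linear in `Y`; a payoff of infinite price has
Lagrangian value `⊥`.

*Structure of the objective.* Each entropic risk measure is convex (`entropic_convex`) and cash
additive, and both properties survive averaging in `a` (`werm_convex`, `werm_cash`). Hence `G` is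
concave, and adding a positive constant strictly increases `G`.

*Existence of the multiplier.* Let `X` be optimal. Its budget binds, since otherwise the unused wealth
could be spent on a constant. If `b(Y) < x < b(Z)`, the convex combination of `Y` and `Z` of price `x`
is no better than `X`, so concavity gives
`(G(Z) - G(X)) / (b(Z) - x) ≤ (G(X) - G(Y)) / (x - b(Y))`.
A number `λ` lying between the two families of slopes is a multiplier (`exists_slope`), and it is
positive because the payoff `X + 1` gives a positive slope.

*Converse and supergradient.* If `X` has price `x` and maximizes the Lagrangian, then
`G(Y) ≤ G(X) + λ (b(Y) - x)` for every `Y` of finite price. This gives optimality when `b(Y) ≤ x`,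
and the supergradient inequality on taking the supremum over `b(Y) ≤ y`.
-/


open MeasureTheory Filter Set
open scoped ENNReal

noncomputable section

variable {Ω : Type*} [MeasurableSpace Ω]

/-! ### The utility function on the closed half-line -/

theorem tendsto_shift {U : ℝ → ℝ} (hUc : ContinuousOn U (Set.Ici 0)) {y : ℝ} (hy : 0 ≤ y) :
    Tendsto (fun e : ℝ => U (y + e)) (nhdsWithin 0 (Set.Ioi 0)) (nhds (U y)) := by
  have h := hUc y hy
  refine h.tendsto.comp ?_
  refine tendsto_nhdsWithin_iff.2 ⟨?_, ?_⟩
  · have : Tendsto (fun e : ℝ => y + e) (nhds 0) (nhds (y + 0)) :=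
      (continuous_const.add continuous_id).tendsto 0
    rw [add_zero] at this
    exact this.mono_left nhdsWithin_le_nhds
  · filter_upwards [self_mem_nhdsWithin] with e he
    have he' : 0 < e := he
    exact (add_nonneg hy he'.le : 0 ≤ y + e)

theorem mono_closed {U : ℝ → ℝ} (hUc : ContinuousOn U (Set.Ici 0))
    (hUmono : StrictMonoOn U (Set.Ioi 0)) {y z : ℝ} (hy : 0 ≤ y) (hyz : y ≤ z) : U y ≤ U z := by
  refine le_of_tendsto_of_tendsto (tendsto_shift hUc hy) (tendsto_shift hUc (hy.trans hyz)) ?_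
  filter_upwards [self_mem_nhdsWithin] with e he
  have he' : 0 < e := he
  exact hUmono.monotoneOn (show 0 < y + e by linarith) (show 0 < z + e by linarith) (by linarith)

theorem concave_closed {U : ℝ → ℝ} (hUc : ContinuousOn U (Set.Ici 0))
    (hUconc : StrictConcaveOn ℝ (Set.Ioi 0) U) {y z s t : ℝ} (hy : 0 ≤ y) (hz : 0 ≤ z)
    (hs : 0 ≤ s) (ht : 0 ≤ t) (hst : s + t = 1) :
    s * U y + t * U z ≤ U (s * y + t * z) := by
  have h3 : 0 ≤ s * y + t * z := by positivity
  refine le_of_tendsto_of_tendsto (((tendsto_shift hUc hy).const_mul s).add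
    ((tendsto_shift hUc hz).const_mul t)) (tendsto_shift hUc h3) ?_
  filter_upwards [self_mem_nhdsWithin] with e he
  have he' : 0 < e := he
  have h := hUconc.concaveOn.2 (show y + e ∈ Set.Ioi (0 : ℝ) from by
    simp only [Set.mem_Ioi]; linarith) (show z + e ∈ Set.Ioi (0 : ℝ) from by
    simp only [Set.mem_Ioi]; linarith) hs ht hst
  simp only [smul_eq_mul] at h
  have h4 : s * (y + e) + t * (z + e) = s * y + t * z + e := by
    linear_combination e * hst
  rwa [h4] at h

theorem aesm_comp {P : Measure Ω} {U : ℝ → ℝ} (hUc : ContinuousOn U (Set.Ici 0)) {Y : Ω → ℝ}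
    (hY : Lpos P Y) : AEStronglyMeasurable (fun ω => U (Y ω)) P := by
  have hc : Continuous (fun y : ℝ => U (max y 0)) :=
    hUc.comp_continuous (continuous_id.max continuous_const) (fun y => le_max_right y 0)
  refine ((hc.measurable.comp hY.1).aestronglyMeasurable (μ := P)).congr ?_
  filter_upwards [hY.2] with ω hω
  simp [max_eq_left hω]

/-! ### Expected utility -/

theorem eutil_eq_coe {P : Measure Ω} {U : ℝ → ℝ} {Y : Ω → ℝ}
    (h : Integrable (fun ω => U (Y ω)) P) :
    eutil P U Y = ((∫ ω, U (Y ω) ∂P : ℝ) : EReal) := by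
  have h1 : ∫⁻ ω, ENNReal.ofReal (U (Y ω)) ∂P ≠ ⊤ := h.lintegral_lt_top.ne
  have h2 : ∫⁻ ω, ENNReal.ofReal (-(U (Y ω))) ∂P ≠ ⊤ := h.neg.lintegral_lt_top.ne
  rw [integral_eq_lintegral_pos_part_sub_lintegral_neg_part h, EReal.coe_sub, eutil, eint,
    EReal.coe_ennreal_toReal h1, EReal.coe_ennreal_toReal h2]

/-- Since `U` is bounded below by `U 0` on the half-line, the expected utility of a nonnegative
payoff is either a genuine integral or `⊤`. -/
theorem integrable_of_eutil_ne_top {P : Measure Ω} [IsProbabilityMeasure P] {U : ℝ → ℝ}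
    (hUc : ContinuousOn U (Set.Ici 0)) (hUmono : StrictMonoOn U (Set.Ioi 0)) {Y : Ω → ℝ}
    (hY : Lpos P Y) (h : eutil P U Y ≠ ⊤) : Integrable (fun ω => U (Y ω)) P := by
  have hneg : ∫⁻ ω, ENNReal.ofReal (-(U (Y ω))) ∂P ≠ ⊤ := by
    refine ne_top_of_le_ne_top (b := ENNReal.ofReal (-(U 0))) ENNReal.ofReal_ne_top ?_
    calc _ ≤ ∫⁻ _, ENNReal.ofReal (-(U 0)) ∂P := by
          refine lintegral_mono_ae ?_
          filter_upwards [hY.2] with ω hω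
          exact ENNReal.ofReal_le_ofReal (neg_le_neg (mono_closed hUc hUmono le_rfl hω))
      _ = _ := by simp
  have hpos : ∫⁻ ω, ENNReal.ofReal (U (Y ω)) ∂P ≠ ⊤ := by
    intro htop
    apply h
    rw [eutil, eint, htop, ← EReal.coe_ennreal_toReal hneg, EReal.coe_ennreal_top,
      EReal.top_sub_coe]
  refine ⟨aesm_comp hUc hY, ?_⟩
  rw [hasFiniteIntegral_iff_norm]
  have : ∀ ω, ENNReal.ofReal ‖U (Y ω)‖ ≤ ENNReal.ofReal (U (Y ω)) + ENNReal.ofReal (-(U (Y ω))) := by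
    intro ω
    rw [Real.norm_eq_abs]
    rcases abs_cases (U (Y ω)) with ⟨h1, -⟩ | ⟨h1, -⟩ <;> rw [h1]
    · exact le_self_add
    · exact le_add_self
  refine (lintegral_mono this).trans_lt ?_
  rw [lintegral_add_left' (aesm_comp hUc hY).aemeasurable.ennreal_ofReal]
  exact ENNReal.add_lt_top.2 ⟨hpos.lt_top, hneg.lt_top⟩

/-! ### The budget -/

/-- Nonnegative payoffs of finite price. On them every extended-real quantity in the problem is
an ordinary real integral. -/
def Adm (P : Measure Ω) (ρ Y : Ω → ℝ) : Prop :=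
  Lpos P Y ∧ Integrable (fun ω => ρ ω * Y ω) P

theorem cost_nonneg {P : Measure Ω} {ρ Y : Ω → ℝ} (hρ0 : ∀ᵐ ω ∂P, 0 < ρ ω) (hY : Lpos P Y) :
    ∀ᵐ ω ∂P, 0 ≤ ρ ω * Y ω := by
  filter_upwards [hρ0, hY.2] with ω h1 h2 using mul_nonneg h1.le h2

theorem adm_of_budget {P : Measure Ω} {ρ Y : Ω → ℝ} (hmρ : Measurable ρ)
    (hρ0 : ∀ᵐ ω ∂P, 0 < ρ ω) (hY : Lpos P Y) (h : budget P ρ Y ≠ ⊤) : Adm P ρ Y :=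
  ⟨hY, (lintegral_ofReal_ne_top_iff_integrable (hmρ.mul hY.1).aestronglyMeasurable
    (cost_nonneg hρ0 hY)).1 h⟩

theorem budget_eq {P : Measure Ω} {ρ Y : Ω → ℝ} (hρ0 : ∀ᵐ ω ∂P, 0 < ρ ω) (hY : Adm P ρ Y) :
    budget P ρ Y = ENNReal.ofReal (∫ ω, ρ ω * Y ω ∂P) :=
  (ofReal_integral_eq_lintegral_ofReal hY.2 (cost_nonneg hρ0 hY.1)).symm

theorem Adm.combo {P : Measure Ω} {ρ Y Z : Ω → ℝ} (hY : Adm P ρ Y) (hZ : Adm P ρ Z) {s t : ℝ}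
    (hs : 0 ≤ s) (ht : 0 ≤ t) : Adm P ρ (fun ω => s * Y ω + t * Z ω) := by
  refine ⟨⟨(hY.1.1.const_mul s).add (hZ.1.1.const_mul t), ?_⟩, ?_⟩
  · filter_upwards [hY.1.2, hZ.1.2] with ω h1 h2
    positivity
  · refine ((hY.2.const_mul s).add (hZ.2.const_mul t)).congr (ae_of_all _ fun ω => ?_)
    simp only [Pi.add_apply]
    ring

theorem cost_combo {P : Measure Ω} {ρ Y Z : Ω → ℝ} (hY : Adm P ρ Y) (hZ : Adm P ρ Z) (s t : ℝ) :
    ∫ ω, ρ ω * (s * Y ω + t * Z ω) ∂P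
      = s * ∫ ω, ρ ω * Y ω ∂P + t * ∫ ω, ρ ω * Z ω ∂P := by
  rw [← integral_const_mul, ← integral_const_mul,
    ← integral_add (hY.2.const_mul s) (hZ.2.const_mul t)]
  congr 1
  ext ω
  ring

theorem adm_const {P : Measure Ω} {ρ : Ω → ℝ} (hρint : Integrable ρ P) {c : ℝ} (hc : 0 ≤ c) :
    Adm P ρ (fun _ => c) :=
  ⟨⟨measurable_const, ae_of_all _ fun _ => hc⟩, hρint.mul_const c⟩

/-- Finiteness of the expected-utility value at one wealth level gives integrable utility for
every payoff of finite price: scale `Y` down by `t` into the finite-value budget set and use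
`U (t * y) ≥ t * U y + (1 - t) * U 0`. -/
theorem utility_integrable {P : Measure Ω} [IsProbabilityMeasure P] {ρ : Ω → ℝ}
    (hρ0 : ∀ᵐ ω ∂P, 0 < ρ ω) (hρint : Integrable ρ P) {U : ℝ → ℝ}
    (hUc : ContinuousOn U (Set.Ici 0)) (hUmono : StrictMonoOn U (Set.Ioi 0))
    (hUconc : StrictConcaveOn ℝ (Set.Ioi 0) U)
    (hufin : ∃ x' : ℝ, 0 < x' ∧
      ∃ r : ℝ, sSup (eutil P U '' {X | feasible P ρ x' X}) = (r : EReal))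
    {Y : Ω → ℝ} (hY : Adm P ρ Y) : Integrable (fun ω => U (Y ω)) P := by
  obtain ⟨x', hx', r, hr⟩ := hufin
  have hB : 0 ≤ ∫ ω, ρ ω * Y ω ∂P := integral_nonneg_of_ae (cost_nonneg hρ0 hY.1)
  set B := ∫ ω, ρ ω * Y ω ∂P with hBdef
  obtain ⟨t, ht0, ht1, htB⟩ : ∃ t : ℝ, 0 < t ∧ t ≤ 1 ∧ t * B ≤ x' := by
    refine ⟨x' / (x' + B), by positivity, (div_le_one (by positivity)).2 (by linarith), ?_⟩
    rw [div_mul_eq_mul_div, div_le_iff₀ (by positivity)]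
    nlinarith
  have h0 := adm_const (P := P) hρint (le_refl (0 : ℝ))
  have hZ := hY.combo h0 ht0.le (sub_nonneg.2 ht1)
  set Z : Ω → ℝ := fun ω => t * Y ω + (1 - t) * 0 with hZdef
  have hZb : budget P ρ Z ≤ ENNReal.ofReal x' := by
    rw [budget_eq hρ0 hZ, cost_combo hY h0]
    refine ENNReal.ofReal_le_ofReal ?_
    simpa using htB
  have hZe : eutil P U Z ≤ (r : EReal) := hr ▸ le_sSup ⟨Z, ⟨hZ.1, hZb⟩, rfl⟩
  have hZi : Integrable (fun ω => U (Z ω)) P :=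
    integrable_of_eutil_ne_top hUc hUmono hZ.1 (ne_top_of_le_ne_top (EReal.coe_ne_top r) hZe)
  have hdom : Integrable (fun ω => |U 0| + |(U (Z ω) - (1 - t) * U 0) / t|) P :=
    (integrable_const _).add (((hZi.sub (integrable_const _)).div_const t).abs)
  refine hdom.mono' (aesm_comp hUc hY.1) ?_
  filter_upwards [hY.1.2] with ω hω
  have h1 := mono_closed hUc hUmono le_rfl hω
  have h2 := concave_closed hUc hUconc hω le_rfl ht0.le (sub_nonneg.2 ht1) (by ring)
  have h3 : U (Y ω) ≤ (U (Z ω) - (1 - t) * U 0) / t := by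
    rw [le_div_iff₀ ht0]
    simp only [hZdef]
    linarith
  rw [Real.norm_eq_abs, abs_le]
  constructor
  · have := neg_abs_le (U 0)
    have := abs_nonneg ((U (Z ω) - (1 - t) * U 0) / t)
    linarith
  · have := le_abs_self ((U (Z ω) - (1 - t) * U 0) / t)
    have := abs_nonneg (U 0)
    linarith

/-! ### The weighted entropic risk measure -/

theorem exp_integrable {P : Measure Ω} [IsProbabilityMeasure P] {Y : Ω → ℝ} (hY : Lpos P Y)
    {a : ℝ} (ha : 0 < a) : Integrable (fun ω => Real.exp (-a * Y ω)) P := by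
  refine (integrable_const (1 : ℝ)).mono'
    (Real.measurable_exp.comp (hY.1.const_mul (-a))).aestronglyMeasurable ?_
  filter_upwards [hY.2] with ω hω
  rw [Real.norm_eq_abs, Real.abs_exp, Real.exp_le_one_iff]
  nlinarith

theorem exp_int_pos {P : Measure Ω} [IsProbabilityMeasure P] {Y : Ω → ℝ} (hY : Lpos P Y)
    {a : ℝ} (ha : 0 < a) : 0 < ∫ ω, Real.exp (-a * Y ω) ∂P :=
  integral_exp_pos (exp_integrable hY ha)

theorem exp_int_le_one {P : Measure Ω} [IsProbabilityMeasure P] {Y : Ω → ℝ} (hY : Lpos P Y)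
    {a : ℝ} (ha : 0 < a) : ∫ ω, Real.exp (-a * Y ω) ∂P ≤ 1 := by
  have h : ∫ ω, Real.exp (-a * Y ω) ∂P ≤ ∫ _, (1 : ℝ) ∂P := by
    refine integral_mono_ae (exp_integrable hY ha) (integrable_const _) ?_
    filter_upwards [hY.2] with ω hω
    rw [Real.exp_le_one_iff]
    nlinarith
  simpa using h

theorem entropic_integrable {P : Measure Ω} [IsProbabilityMeasure P] {a₀ a₁ : ℝ} (ha₀ : 0 < a₀)
    {m : Measure ℝ} [IsProbabilityMeasure m] {Y : Ω → ℝ} (hY : Lpos P Y) :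
    IntegrableOn (fun a => entropic P a Y) (Set.Icc a₀ a₁) m := by
  have hmeas : Measurable (fun a : ℝ => ∫ ω, Real.exp (-a * Y ω) ∂P) := by
    have h1 : Measurable (fun p : ℝ × Ω => Real.exp (-p.1 * Y p.2)) :=
      Real.measurable_exp.comp (measurable_fst.neg.mul (hY.1.comp measurable_snd))
    exact (h1.stronglyMeasurable.integral_prod_right (ν := P)).measurable
  have hmeas2 : Measurable (fun a => entropic P a Y) :=
    (measurable_const.div measurable_id).mul (Real.measurable_log.comp hmeas)
  refine Measure.integrableOn_of_bounded (M := 1 / a₀ * -Real.log (∫ ω, Real.exp (-a₁ * Y ω) ∂P))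
    (measure_ne_top _ _) hmeas2.aestronglyMeasurable ?_
  refine (ae_restrict_iff' measurableSet_Icc).2 (ae_of_all _ fun a ha => ?_)
  have hapos : 0 < a := ha₀.trans_le ha.1
  have h1pos : 0 < a₁ := hapos.trans_le ha.2
  have hle : ∫ ω, Real.exp (-a₁ * Y ω) ∂P ≤ ∫ ω, Real.exp (-a * Y ω) ∂P := by
    refine integral_mono_ae (exp_integrable hY h1pos) (exp_integrable hY hapos) ?_
    filter_upwards [hY.2] with ω hω
    refine Real.exp_le_exp.2 ?_
    nlinarith [ha.2]
  have hlog := Real.log_le_log (exp_int_pos hY h1pos) hle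
  have hlog0 := Real.log_nonpos (exp_int_pos hY hapos).le (exp_int_le_one hY hapos)
  rw [entropic, Real.norm_eq_abs, abs_mul, abs_of_pos (by positivity : 0 < 1 / a),
    abs_of_nonpos hlog0]
  exact mul_le_mul (one_div_le_one_div_of_le ha₀ ha.1) (by linarith) (by linarith) (by positivity)

/-- Convexity of the entropic risk measure: normalizing both exponentials to have mean one,
convexity of `exp` bounds the mean of their weighted geometric mean by one. -/
theorem entropic_convex {P : Measure Ω} [IsProbabilityMeasure P] {Y Z : Ω → ℝ} (hY : Lpos P Y)
    (hZ : Lpos P Z) {s t : ℝ} (hs : 0 ≤ s) (ht : 0 ≤ t) (hst : s + t = 1)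
    (hW : Lpos P (fun ω => s * Y ω + t * Z ω)) {a : ℝ} (ha : 0 < a) :
    entropic P a (fun ω => s * Y ω + t * Z ω) ≤ s * entropic P a Y + t * entropic P a Z := by
  have hA := exp_int_pos hY ha
  have hB := exp_int_pos hZ ha
  have hC := exp_int_pos hW ha
  have hYi := exp_integrable hY ha
  have hZi := exp_integrable hZ ha
  have hWi := exp_integrable hW ha
  simp only [entropic]
  set A := ∫ ω, Real.exp (-a * Y ω) ∂P with hAdef
  set B := ∫ ω, Real.exp (-a * Z ω) ∂P with hBdef
  set C := ∫ ω, Real.exp (-a * (s * Y ω + t * Z ω)) ∂P with hCdef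
  set K := s * Real.log A + t * Real.log B with hK
  have hpt : ∀ ω, Real.exp (-a * (s * Y ω + t * Z ω)) * Real.exp (-K)
      ≤ s * (Real.exp (-a * Y ω) / A) + t * (Real.exp (-a * Z ω) / B) := by
    intro ω
    have h := convexOn_exp.2 (Set.mem_univ (-a * Y ω - Real.log A))
      (Set.mem_univ (-a * Z ω - Real.log B)) hs ht hst
    simp only [smul_eq_mul, Real.exp_sub, Real.exp_log hA, Real.exp_log hB] at h
    have hexp : -a * (s * Y ω + t * Z ω) + -K
        = s * (-a * Y ω - Real.log A) + t * (-a * Z ω - Real.log B) := by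
      rw [hK]
      ring
    rwa [← Real.exp_add, hexp]
  have hint : C * Real.exp (-K) ≤ 1 := by
    calc C * Real.exp (-K)
        = ∫ ω, Real.exp (-a * (s * Y ω + t * Z ω)) * Real.exp (-K) ∂P :=
          (integral_mul_const _ _).symm
      _ ≤ ∫ ω, (s * (Real.exp (-a * Y ω) / A) + t * (Real.exp (-a * Z ω) / B)) ∂P :=
          integral_mono (hWi.mul_const _)
            (((hYi.div_const A).const_mul s).add ((hZi.div_const B).const_mul t)) hpt
      _ = s * (A / A) + t * (B / B) := by
          rw [integral_add ((hYi.div_const A).const_mul s) ((hZi.div_const B).const_mul t),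
            integral_const_mul, integral_const_mul, integral_div, integral_div]
      _ = 1 := by rw [div_self hA.ne', div_self hB.ne']; linarith
  have hlog : Real.log C ≤ K := by
    rw [Real.log_le_iff_le_exp hC]
    rwa [Real.exp_neg, ← div_eq_mul_inv, div_le_one (Real.exp_pos K)] at hint
  calc 1 / a * Real.log C ≤ 1 / a * K := mul_le_mul_of_nonneg_left hlog (by positivity)
    _ = _ := by rw [hK]; ring

theorem werm_convex {P : Measure Ω} [IsProbabilityMeasure P] {a₀ a₁ : ℝ} (ha₀ : 0 < a₀)
    {m : Measure ℝ} [IsProbabilityMeasure m] {Y Z : Ω → ℝ} (hY : Lpos P Y)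
    (hZ : Lpos P Z) {s t : ℝ} (hs : 0 ≤ s) (ht : 0 ≤ t) (hst : s + t = 1)
    (hW : Lpos P (fun ω => s * Y ω + t * Z ω)) :
    werm P m a₀ a₁ (fun ω => s * Y ω + t * Z ω)
      ≤ s * werm P m a₀ a₁ Y + t * werm P m a₀ a₁ Z := by
  have hYi := entropic_integrable (P := P) (a₁ := a₁) (m := m) ha₀ hY
  have hZi := entropic_integrable (P := P) (a₁ := a₁) (m := m) ha₀ hZ
  have hWi := entropic_integrable (P := P) (a₁ := a₁) (m := m) ha₀ hW
  simp only [werm]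
  rw [← integral_const_mul, ← integral_const_mul,
    ← integral_add (hYi.const_mul s) (hZi.const_mul t)]
  exact setIntegral_mono_on hWi ((hYi.const_mul s).add (hZi.const_mul t)) measurableSet_Icc
    fun a ha => entropic_convex hY hZ hs ht hst hW (ha₀.trans_le ha.1)

theorem werm_cash {P : Measure Ω} [IsProbabilityMeasure P] {a₀ a₁ : ℝ} (ha₀ : 0 < a₀)
    {m : Measure ℝ} [IsProbabilityMeasure m] (hm : m (Set.Icc a₀ a₁) = 1) {Y : Ω → ℝ}
    (hY : Lpos P Y) (c : ℝ) :
    werm P m a₀ a₁ (fun ω => Y ω + c) = werm P m a₀ a₁ Y - c := by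
  have hYi := entropic_integrable (P := P) (a₁ := a₁) (m := m) ha₀ hY
  have h : ∀ a ∈ Set.Icc a₀ a₁, entropic P a (fun ω => Y ω + c) = entropic P a Y - c := by
    intro a ha
    have hapos : 0 < a := ha₀.trans_le ha.1
    have h1 : ∀ ω, Real.exp (-a * (Y ω + c)) = Real.exp (-a * Y ω) * Real.exp (-a * c) := by
      intro ω
      rw [← Real.exp_add]
      ring_nf
    simp only [entropic, h1]
    rw [integral_mul_const, Real.log_mul (exp_int_pos hY hapos).ne' (Real.exp_pos _).ne',
      Real.log_exp]
    field_simp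
    ring
  simp only [werm]
  rw [setIntegral_congr_fun measurableSet_Icc h, integral_sub hYi (integrable_const c)]
  simp [Measure.real, hm]

/-! ### The objective on payoffs of finite price -/

/-- The objective `E[U(Y)] - μ h(Y)` as a real number; meaningful when `U ∘ Y` is integrable. -/
def gobj (P : Measure Ω) (m : Measure ℝ) (a₀ a₁ : ℝ) (U : ℝ → ℝ) (μ : ℝ) (Y : Ω → ℝ) : ℝ :=
  (∫ ω, U (Y ω) ∂P) - μ * werm P m a₀ a₁ Y

/-- Separation of slopes in one dimension. The pairs `(b i, g i)` play the role of price and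
objective value of the payoffs `i`, and `hsep` says that at `x` each chord joining points on either
side of `x` lies at or below `g₀`, in cross-multiplied form. Every slope from `(x, g₀)` to the right
is then at most every slope to the left, and `lam` is the supremum of the former. -/
theorem exists_slope {ι : Type*} (S : Set ι) (b g : ι → ℝ) (x g₀ : ℝ)
    (hlow : ∃ i ∈ S, b i < x) (hhigh : ∃ i ∈ S, x < b i ∧ g₀ < g i)
    (heq : ∀ i ∈ S, b i = x → g i ≤ g₀)
    (hsep : ∀ i ∈ S, ∀ j ∈ S, b i < x → x < b j →
      (g j - g₀) * (x - b i) ≤ (g₀ - g i) * (b j - x)) :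
    ∃ lam : ℝ, 0 < lam ∧ ∀ i ∈ S, g i - lam * b i ≤ g₀ - lam * x := by
  obtain ⟨i₀, hi₀, hb₀⟩ := hlow
  obtain ⟨j₀, hj₀, hbj₀, hgj₀⟩ := hhigh
  set T : Set ℝ := (fun j => (g j - g₀) / (b j - x)) '' {j | j ∈ S ∧ x < b j} with hT
  have hub : ∀ i ∈ S, b i < x → ∀ y ∈ T, y ≤ (g₀ - g i) / (x - b i) := by
    rintro i hi hb _ ⟨j, ⟨hj, hbj⟩, rfl⟩
    exact (div_le_div_iff₀ (by linarith) (by linarith)).2 (hsep i hi j hj hb hbj)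
  have hbdd : BddAbove T := ⟨_, hub i₀ hi₀ hb₀⟩
  have hne : T.Nonempty := ⟨_, j₀, ⟨hj₀, hbj₀⟩, rfl⟩
  refine ⟨sSup T, ?_, fun i hi => ?_⟩
  · exact (div_pos (sub_pos.2 hgj₀) (sub_pos.2 hbj₀)).trans_le
      (le_csSup hbdd ⟨j₀, ⟨hj₀, hbj₀⟩, rfl⟩)
  · rcases lt_trichotomy (b i) x with h | h | h
    · have h1 := csSup_le hne (hub i hi h)
      rw [le_div_iff₀ (by linarith)] at h1
      linarith
    · have := heq i hi h
      rw [h]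
      linarith
    · have h1 : (g i - g₀) / (b i - x) ≤ sSup T := le_csSup hbdd ⟨i, ⟨hi, h⟩, rfl⟩
      rw [div_le_iff₀ (by linarith)] at h1
      linarith

/-- Lagrangian characterization for the budget constraint: `X* ∈ L⁰₊` solves
`max E[U(X)] - μ h(X)` over `{X ∈ L⁰₊ : E[ρX] ≤ x}` iff there is `λ* > 0` such that `X*`
maximizes `E[U(X)] - μ h(X) - λ* E[ρX]` over `L⁰₊` and `E[ρX*] = x`; in that case `λ*` is
a supergradient of the value function `v_μ` at `x`. -/
theorem eu_budget_lagrangian (P : Measure Ω) [IsProbabilityMeasure P]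
    (a₀ a₁ : ℝ) (ha₀ : 0 < a₀) (ha₀₁ : a₀ < a₁)
    (m : Measure ℝ) [IsProbabilityMeasure m] (hm : m (Set.Icc a₀ a₁) = 1)
    (ρ : Ω → ℝ) (hmρ : Measurable ρ) (hρ0 : ∀ᵐ ω ∂P, 0 < ρ ω) (hρint : Integrable ρ P)
    (U U' : ℝ → ℝ)
    (hUc : ContinuousOn U (Set.Ici 0))
    (hUd : ∀ y : ℝ, 0 < y → HasDerivAt U (U' y) y)
    (hU'c : ContinuousOn U' (Set.Ioi 0))
    (hUmono : StrictMonoOn U (Set.Ioi 0))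
    (hUconc : StrictConcaveOn ℝ (Set.Ioi 0) U)
    (hInada0 : Tendsto U' (nhdsWithin 0 (Set.Ioi 0)) atTop)
    (hInadaInf : Tendsto U' atTop (nhds 0))
    (hAE : Filter.limsup (fun y => y * U' y / U y) Filter.atTop < 1)
    (hufin : ∃ x' : ℝ, 0 < x' ∧
      ∃ r : ℝ, sSup (eutil P U '' {X | feasible P ρ x' X}) = (r : EReal))
    (x : ℝ) (hx : 0 < x) (μ : ℝ) (hμ : 0 < μ)
    (X : Ω → ℝ) (hX : Lpos P X) :
    ((budget P ρ X ≤ ENNReal.ofReal x ∧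
        ∀ Y, Lpos P Y → budget P ρ Y ≤ ENNReal.ofReal x →
          eutil P U Y - ((μ * werm P m a₀ a₁ Y : ℝ) : EReal)
            ≤ eutil P U X - ((μ * werm P m a₀ a₁ X : ℝ) : EReal)) ↔
      ∃ lam : ℝ, 0 < lam ∧
        (∀ Y, Lpos P Y →
          fullObj P m a₀ a₁ ρ U μ lam Y ≤ fullObj P m a₀ a₁ ρ U μ lam X) ∧
        budget P ρ X = ENNReal.ofReal x) ∧
    (∀ lam : ℝ, 0 < lam →
      (∀ Y, Lpos P Y →
        fullObj P m a₀ a₁ ρ U μ lam Y ≤ fullObj P m a₀ a₁ ρ U μ lam X) →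
      budget P ρ X = ENNReal.ofReal x →
      ∀ y : ℝ, 0 < y →
        sSup ((fun Y => eutil P U Y - ((μ * werm P m a₀ a₁ Y : ℝ) : EReal)) ''
            {Y | Lpos P Y ∧ budget P ρ Y ≤ ENNReal.ofReal y})
          ≤ sSup ((fun Y => eutil P U Y - ((μ * werm P m a₀ a₁ Y : ℝ) : EReal)) ''
              {Y | Lpos P Y ∧ budget P ρ Y ≤ ENNReal.ofReal x})
            + ((lam * (y - x) : ℝ) : EReal)) := by
  set G := gobj P m a₀ a₁ U μ with hG
  set b : (Ω → ℝ) → ℝ := fun Y => ∫ ω, ρ ω * Y ω ∂P with hb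
  have hUi : ∀ Y, Adm P ρ Y → Integrable (fun ω => U (Y ω)) P := fun Y hY =>
    utility_integrable hρ0 hρint hUc hUmono hUconc hufin hY
  have hbud : ∀ Y, Adm P ρ Y → budget P ρ Y = ENNReal.ofReal (b Y) := fun Y hY =>
    budget_eq hρ0 hY
  have hb0 : ∀ Y, Adm P ρ Y → 0 ≤ b Y := fun Y hY =>
    integral_nonneg_of_ae (cost_nonneg hρ0 hY.1)
  have hadm : ∀ Y, Lpos P Y → budget P ρ Y ≠ ⊤ → Adm P ρ Y := fun Y hY h =>
    adm_of_budget hmρ hρ0 hY h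
  have hobj : ∀ Y, Adm P ρ Y →
      eutil P U Y - ((μ * werm P m a₀ a₁ Y : ℝ) : EReal) = ((G Y : ℝ) : EReal) := by
    intro Y hY
    rw [eutil_eq_coe (hUi Y hY), ← EReal.coe_sub]
    rfl
  have hfull : ∀ lam, ∀ Y, Adm P ρ Y →
      fullObj P m a₀ a₁ ρ U μ lam Y = ((G Y - lam * b Y : ℝ) : EReal) := by
    intro lam Y hY
    rw [fullObj, hobj Y hY, hbud Y hY, EReal.coe_ennreal_ofReal, max_eq_left (hb0 Y hY),
      ← EReal.coe_mul, ← EReal.coe_sub]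
  have hle_iff : ∀ Y, Adm P ρ Y → ∀ y : ℝ, 0 < y →
      (budget P ρ Y ≤ ENNReal.ofReal y ↔ b Y ≤ y) := by
    intro Y hY y hy
    rw [hbud Y hY, ENNReal.ofReal_le_ofReal_iff hy.le]
  have hadm_le : ∀ Y, Lpos P Y → ∀ y : ℝ, budget P ρ Y ≤ ENNReal.ofReal y → Adm P ρ Y :=
    fun Y hY y h => hadm Y hY (ne_top_of_le_ne_top ENNReal.ofReal_ne_top h)
  have hconc : ∀ Y, Adm P ρ Y → ∀ Z, Adm P ρ Z → ∀ s t : ℝ, 0 ≤ s → 0 ≤ t → s + t = 1 →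
      s * G Y + t * G Z ≤ G (fun ω => s * Y ω + t * Z ω) := by
    intro Y hY Z hZ s t hs ht hst
    have hW := hY.combo hZ hs ht
    have h1 := werm_convex (a₁ := a₁) (m := m) ha₀ hY.1 hZ.1 hs ht hst hW.1
    have h2 : s * ∫ ω, U (Y ω) ∂P + t * ∫ ω, U (Z ω) ∂P
        ≤ ∫ ω, U (s * Y ω + t * Z ω) ∂P := by
      rw [← integral_const_mul, ← integral_const_mul,
        ← integral_add ((hUi Y hY).const_mul s) ((hUi Z hZ).const_mul t)]
      refine integral_mono_ae (((hUi Y hY).const_mul s).add ((hUi Z hZ).const_mul t))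
        (hUi _ hW) ?_
      filter_upwards [hY.1.2, hZ.1.2] with ω hy hz
      exact concave_closed hUc hUconc hy hz hs ht hst
    have h3 := mul_le_mul_of_nonneg_left h1 hμ.le
    simp only [hG, gobj]
    linarith
  -- By cash invariance, adding a constant strictly improves the objective.
  have hshift : Adm P ρ X → ∀ c : ℝ, 0 < c → Adm P ρ (fun ω => X ω + c) ∧
      b (fun ω => X ω + c) = b X + c * ∫ ω, ρ ω ∂P ∧ G X < G (fun ω => X ω + c) := by
    intro hXa c hc
    have hA : Adm P ρ (fun ω => X ω + c) := by
      have := hXa.combo (adm_const (P := P) hρint hc.le) zero_le_one zero_le_one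
      simpa using this
    refine ⟨hA, ?_, ?_⟩
    · have := cost_combo hXa (adm_const (P := P) hρint hc.le) 1 1
      simp only [one_mul, integral_mul_const] at this
      simp only [hb]
      rw [this]
      ring
    · have h1 := werm_cash (P := P) ha₀ hm hX c
      have h2 : ∫ ω, U (X ω) ∂P ≤ ∫ ω, U (X ω + c) ∂P := by
        refine integral_mono_ae (hUi X hXa) (hUi _ hA) ?_
        filter_upwards [hX.2] with ω hω
        exact mono_closed hUc hUmono hω (by linarith)
      simp only [hG, gobj]
      rw [h1]
      nlinarith [mul_pos hμ hc]
  have hρpos : 0 < ∫ ω, ρ ω ∂P := by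
    rw [integral_pos_iff_support_of_nonneg_ae (hρ0.mono fun _ h => h.le) hρint]
    have h1 : P (Function.support ρ) = 1 := by
      rw [prob_compl_eq_zero_iff₀ _ |>.symm]
      · exact measure_mono_null (fun ω hω => by simpa using hω) (ae_iff.1 (hρ0.mono fun _ h => h.ne'))
      · exact (measurableSet_support hmρ).nullMeasurableSet
    rw [h1]
    exact one_pos
  -- A maximizer of the Lagrangian whose price is `x` satisfies the supergradient inequality
  -- against every payoff of finite price.
  have hback : ∀ lam : ℝ, 0 < lam →
      (∀ Y, Lpos P Y →
        fullObj P m a₀ a₁ ρ U μ lam Y ≤ fullObj P m a₀ a₁ ρ U μ lam X) →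
      budget P ρ X = ENNReal.ofReal x → Adm P ρ X ∧ b X = x ∧
      ∀ Y, Adm P ρ Y → G Y ≤ G X + lam * (b Y - x) := by
    intro lam hlam hmax hbx
    have hXa : Adm P ρ X := hadm_le X hX x hbx.le
    have hbX : b X = x := by
      rw [hbud X hXa] at hbx
      exact (ENNReal.ofReal_eq_ofReal_iff (hb0 X hXa) hx.le).1 hbx
    refine ⟨hXa, hbX, fun Y hY => ?_⟩
    have h := hmax Y hY.1
    rw [hfull lam Y hY, hfull lam X hXa, EReal.coe_le_coe_iff, hbX] at h
    linarith
  refine ⟨⟨?_, ?_⟩, ?_⟩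
  · rintro ⟨hbx, hopt⟩
    have hXa : Adm P ρ X := hadm_le X hX x hbx
    have hbXle : b X ≤ x := (hle_iff X hXa x hx).1 hbx
    have hopt' : ∀ Y, Adm P ρ Y → b Y ≤ x → G Y ≤ G X := by
      intro Y hY hYx
      have h := hopt Y hY.1 ((hle_iff Y hY x hx).2 hYx)
      rwa [hobj Y hY, hobj X hXa, EReal.coe_le_coe_iff] at h
    have hbX : b X = x := by
      by_contra hne
      have hlt : b X < x := lt_of_le_of_ne hbXle hne
      -- This `c` spends exactly the unused wealth.
      obtain ⟨h1, h2, h3⟩ := hshift hXa ((x - b X) / ∫ ω, ρ ω ∂P) (div_pos (by linarith) hρpos)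
      rw [div_mul_cancel₀ _ hρpos.ne'] at h2
      exact absurd (hopt' _ h1 (by linarith)) (not_le.2 h3)
    obtain ⟨lam, hlam, hsup⟩ := exists_slope {Y | Adm P ρ Y} b G x (G X)
      ⟨fun _ => 0, adm_const hρint le_rfl, by simpa [hb] using hx⟩
      (by
        obtain ⟨h1, h2, h3⟩ := hshift hXa 1 one_pos
        exact ⟨_, h1, by linarith, h3⟩)
      (fun Y hY h => hopt' Y hY h.le)
      (by
        intro Y hY Z hZ hYx hZx
        -- The convex combination of `Y` and `Z` with price exactly `x`.
        have hd : 0 < b Z - b Y := by linarith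
        set s := (b Z - x) / (b Z - b Y) with hs
        set t := (x - b Y) / (b Z - b Y) with ht
        have hs0 : 0 ≤ s := div_nonneg (by linarith) hd.le
        have ht0 : 0 ≤ t := div_nonneg (by linarith) hd.le
        have hst : s + t = 1 := by
          rw [hs, ht, ← add_div, div_eq_one_iff_eq hd.ne']
          ring
        have hsd : s * (b Z - b Y) = b Z - x := div_mul_cancel₀ _ hd.ne'
        have htd : t * (b Z - b Y) = x - b Y := div_mul_cancel₀ _ hd.ne'
        have hbW : b (fun ω => s * Y ω + t * Z ω) = s * b Y + t * b Z := cost_combo hY hZ s t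
        have h1 := hopt' _ (hY.combo hZ hs0 ht0) (by
          rw [hbW]
          have : s * b Y + t * b Z = x := by linear_combination (b Y) * hst + htd
          exact this.le)
        have h2 := (hconc Y hY Z hZ s t hs0 ht0 hst).trans h1
        have h3 := mul_le_mul_of_nonneg_right h2 hd.le
        have h4 : (s * G Y + t * G Z) * (b Z - b Y)
            = (b Z - x) * G Y + (x - b Y) * G Z := by
          linear_combination (G Y) * hsd + (G Z) * htd
        rw [h4] at h3
        linarith)
    refine ⟨lam, hlam, fun Y hY => ?_, by rw [hbud X hXa, hbX]⟩
    by_cases htop : budget P ρ Y = ⊤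
    · -- Infinite price: the Lagrangian is `⊥`, also when the utility is `⊤`, as `⊤ - ⊤ = ⊥`.
      rw [fullObj, htop, EReal.coe_ennreal_top, EReal.coe_mul_top_of_pos hlam, sub_eq_add_neg,
        EReal.neg_top, EReal.add_bot]
      exact bot_le
    · have hYa := hadm Y hY htop
      rw [hfull lam Y hYa, hfull lam X hXa, EReal.coe_le_coe_iff, hbX]
      exact hsup Y hYa
  · rintro ⟨lam, hlam, hmax, hbx⟩
    obtain ⟨hXa, hbX, hsup⟩ := hback lam hlam hmax hbx
    refine ⟨hbx.le, fun Y hY hYx => ?_⟩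
    have hYa := hadm_le Y hY x hYx
    rw [hobj Y hYa, hobj X hXa, EReal.coe_le_coe_iff]
    have h1 := (hle_iff Y hYa x hx).1 hYx
    have h2 := hsup Y hYa
    nlinarith
  · intro lam hlam hmax hbx y hy
    obtain ⟨hXa, hbX, hsup⟩ := hback lam hlam hmax hbx
    refine sSup_le ?_
    rintro _ ⟨Y, ⟨hY, hYy⟩, rfl⟩
    have hYa := hadm_le Y hY y hYy
    have h1 := (hle_iff Y hYa y hy).1 hYy
    have h2 := hsup Y hYa
    have h3 : ((G X : ℝ) : EReal) ≤
        sSup ((fun Y => eutil P U Y - ((μ * werm P m a₀ a₁ Y : ℝ) : EReal)) ''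
          {Y | Lpos P Y ∧ budget P ρ Y ≤ ENNReal.ofReal x}) :=
      le_sSup ⟨X, ⟨hX, hbx.le⟩, hobj X hXa⟩
    calc eutil P U Y - ((μ * werm P m a₀ a₁ Y : ℝ) : EReal)
        = ((G Y : ℝ) : EReal) := hobj Y hYa
      _ ≤ ((G X + lam * (y - x) : ℝ) : EReal) := by
          rw [EReal.coe_le_coe_iff]
          nlinarith
      _ = ((G X : ℝ) : EReal) + ((lam * (y - x) : ℝ) : EReal) := EReal.coe_add _ _
      _ ≤ _ := add_le_add h3 le_rfl
end
end

section
/- Let μ > 0 and λ > 0 be such that the supremum of E[U(X)] − μ·h(X) − λ·E[ρX] over X ∈ L⁰₊ is finite. If X* ∈ L⁰₊ maximizes E[U(X)] − μ·h(X) − λ·E[ρX] over X ∈ L⁰₊, then U′(X*) − λρ − μ·h′(X*) ≥ 0 a.s. -/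
/-!
The maximizer `X` has finite objective, and `U` is bounded below by `U 0` on `[0, ∞)`, so `U(X)` and
`ρX` are integrable and the objective may be compared in `ℝ` with that of nearby payoffs.

Two perturbations are used. Raising `X` to `ε` on `{X = 0}` gains utility at an infinite marginal
rate (Inada condition at `0`) against a cost linear in `ε`, so `X > 0` a.s. (`pos_of_max`). Then, for
a fixed `ε > 0`, let `A` be the set where `ε ≤ X` and
`(U(X) - U(X - ε))/ε - λρ - μ e^{a₁ε} h′(X) < 0`. Replacing `X` by `X - ε 1_A` changes the objective
by at least `-ε` times the integral of this quantity over `A`, because the risk increases by at most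
`ε e^{a₁ε} E[1_A (-h′(X))]` (`werm_sub_le`, from `log t ≤ t - 1` and Fubini); hence `A` is null
(`step_of_max`). Taking `ε = 1/(n+1)` and letting `n → ∞` pointwise, at a fixed `ω` with `X ω > 0`,
gives the claim. Since `ε` is fixed while integrating, no dominated convergence is needed.
-/

open MeasureTheory Filter Set
open scoped ENNReal

noncomputable section

variable {Ω : Type*} [MeasurableSpace Ω]

/-! ### Laplace transform and risk measure -/

lemma integrable_exp_neg {P : Measure Ω} [IsProbabilityMeasure P] {X : Ω → ℝ} (hX : Lpos P X)
    {a : ℝ} (ha : 0 ≤ a) : Integrable (fun ω => Real.exp (-a * X ω)) P := by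
  have hXm := hX.1
  refine Integrable.of_bound (C := 1) (by fun_prop) ?_
  filter_upwards [hX.2] with ω hω
  rw [Real.norm_eq_abs, abs_of_pos (Real.exp_pos _), Real.exp_le_one_iff]
  nlinarith

lemma mgf_pos {P : Measure Ω} [IsProbabilityMeasure P] {X : Ω → ℝ} (hX : Lpos P X)
    {a : ℝ} (ha : 0 ≤ a) : 0 < ∫ ω, Real.exp (-a * X ω) ∂P :=
  integral_exp_pos (integrable_exp_neg hX ha)

lemma mgf_le_one {P : Measure Ω} [IsProbabilityMeasure P] {X : Ω → ℝ} (hX : Lpos P X)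
    {a : ℝ} (ha : 0 ≤ a) : ∫ ω, Real.exp (-a * X ω) ∂P ≤ 1 := by
  have : ∫ ω, Real.exp (-a * X ω) ∂P ≤ ∫ _, (1 : ℝ) ∂P := by
    refine integral_mono_ae (integrable_exp_neg hX ha) (integrable_const _) ?_
    filter_upwards [hX.2] with ω hω
    rw [Real.exp_le_one_iff]
    nlinarith
  simpa using this

lemma mgf_anti {P : Measure Ω} [IsProbabilityMeasure P] {X : Ω → ℝ} (hX : Lpos P X)
    {a b : ℝ} (ha : 0 ≤ a) (hab : a ≤ b) :
    ∫ ω, Real.exp (-b * X ω) ∂P ≤ ∫ ω, Real.exp (-a * X ω) ∂P := by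
  refine integral_mono_ae (integrable_exp_neg hX (ha.trans hab)) (integrable_exp_neg hX ha) ?_
  filter_upwards [hX.2] with ω hω
  apply Real.exp_le_exp.2
  nlinarith

lemma measurable_mgf {P : Measure Ω} [IsProbabilityMeasure P] {X : Ω → ℝ} (hX : Measurable X) :
    Measurable (fun a : ℝ => ∫ ω, Real.exp (-a * X ω) ∂P) := by
  have h : StronglyMeasurable (Function.uncurry (fun (a : ℝ) (ω : Ω) => Real.exp (-a * X ω))) := by
    apply Measurable.stronglyMeasurable
    unfold Function.uncurry
    fun_prop
  exact h.integral_prod_right.measurable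

lemma integrableOn_entropic {P : Measure Ω} [IsProbabilityMeasure P] {X : Ω → ℝ} (hX : Lpos P X)
    {m : Measure ℝ} [IsProbabilityMeasure m] {a₀ a₁ : ℝ} (ha₀ : 0 < a₀) :
    IntegrableOn (fun a => entropic P a X) (Icc a₀ a₁) m := by
  have hM := measurable_mgf (P := P) hX.1
  refine Integrable.of_bound (C := (1 / a₀) * (-Real.log (∫ ω, Real.exp (-a₁ * X ω) ∂P)))
    (Measurable.aestronglyMeasurable (by unfold entropic; fun_prop)) ?_
  filter_upwards [ae_restrict_mem measurableSet_Icc] with a ha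
  have h0 : 0 < a := ha₀.trans_le ha.1
  have hlog := Real.log_nonpos (mgf_pos hX h0.le).le (mgf_le_one hX h0.le)
  have hlog' := Real.log_le_log (mgf_pos hX (h0.le.trans ha.2)) (mgf_anti hX h0.le ha.2)
  rw [entropic, Real.norm_eq_abs, abs_mul, abs_of_pos (by positivity), abs_of_nonpos hlog]
  refine mul_le_mul (one_div_le_one_div_of_le ha₀ ha.1) (by linarith) (by linarith) (by positivity)

lemma werm_anti {P : Measure Ω} [IsProbabilityMeasure P] {X Y : Ω → ℝ} (hX : Lpos P X)
    (hY : Lpos P Y) (hXY : ∀ᵐ ω ∂P, X ω ≤ Y ω)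
    {m : Measure ℝ} [IsProbabilityMeasure m] {a₀ a₁ : ℝ} (ha₀ : 0 < a₀) :
    werm P m a₀ a₁ Y ≤ werm P m a₀ a₁ X := by
  refine setIntegral_mono_on (integrableOn_entropic hY ha₀) (integrableOn_entropic hX ha₀)
    measurableSet_Icc fun a ha => ?_
  have h0 : 0 < a := ha₀.trans_le ha.1
  refine mul_le_mul_of_nonneg_left (Real.log_le_log (mgf_pos hY h0.le) ?_) (by positivity)
  refine integral_mono_ae (integrable_exp_neg hY h0.le) (integrable_exp_neg hX h0.le) ?_
  filter_upwards [hXY] with ω hω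
  apply Real.exp_le_exp.2
  nlinarith

/-! ### Marginal risk density -/

/-- Joint integrability of the density `e^{-aX}/E[e^{-aX}]`, which is bounded by
`1/E[e^{-a₁X}]`; it permits exchanging the two integrals. -/
lemma integrable_density {P : Measure Ω} [IsProbabilityMeasure P] {X : Ω → ℝ} (hX : Lpos P X)
    {m : Measure ℝ} [IsProbabilityMeasure m] {a₀ a₁ : ℝ} (ha₀ : 0 < a₀) :
    Integrable (fun z : Ω × ℝ => Real.exp (-z.2 * X z.1) / (∫ ω', Real.exp (-z.2 * X ω') ∂P))
      (P.prod (m.restrict (Icc a₀ a₁))) := by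
  have hM := measurable_mgf (P := P) hX.1
  have hXm := hX.1
  have hmeas : Measurable (fun z : Ω × ℝ =>
      Real.exp (-z.2 * X z.1) / (∫ ω', Real.exp (-z.2 * X ω') ∂P)) := by
    refine Measurable.div (by fun_prop) (hM.comp measurable_snd)
  refine Integrable.of_bound (C := 1 / ∫ ω, Real.exp (-a₁ * X ω) ∂P)
    hmeas.aestronglyMeasurable ?_
  have h1 : ∀ᵐ z ∂(P.prod (m.restrict (Icc a₀ a₁))), 0 ≤ X z.1 :=
    Measure.quasiMeasurePreserving_fst.ae hX.2
  have h2 : ∀ᵐ z ∂(P.prod (m.restrict (Icc a₀ a₁))), z.2 ∈ Icc a₀ a₁ :=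
    Measure.quasiMeasurePreserving_snd.ae (ae_restrict_mem measurableSet_Icc)
  filter_upwards [h1, h2] with z hz ha
  have h0 : 0 < z.2 := ha₀.trans_le ha.1
  have hp := mgf_pos hX h0.le
  rw [Real.norm_eq_abs, abs_of_pos (by positivity)]
  refine div_le_div₀ zero_le_one ?_ (mgf_pos hX (h0.le.trans ha.2)) (mgf_anti hX h0.le ha.2)
  rw [Real.exp_le_one_iff]
  nlinarith

lemma integrable_hprime {P : Measure Ω} [IsProbabilityMeasure P] {X : Ω → ℝ} (hX : Lpos P X)
    {m : Measure ℝ} [IsProbabilityMeasure m] {a₀ a₁ : ℝ} (ha₀ : 0 < a₀) :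
    Integrable (hprime P m a₀ a₁ X) P :=
  (integrable_density hX ha₀).integral_prod_left.neg

lemma measurable_hprime {P : Measure Ω} [IsProbabilityMeasure P] {X : Ω → ℝ} (hX : Measurable X)
    {m : Measure ℝ} [IsProbabilityMeasure m] {a₀ a₁ : ℝ} :
    Measurable (hprime P m a₀ a₁ X) := by
  have hM := measurable_mgf (P := P) hX
  have h : StronglyMeasurable (Function.uncurry (fun (ω : Ω) (a : ℝ) =>
      Real.exp (-a * X ω) / (∫ ω', Real.exp (-a * X ω') ∂P))) := by
    apply Measurable.stronglyMeasurable
    exact Measurable.div (by fun_prop) (hM.comp measurable_snd)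
  exact (h.integral_prod_right (ν := m.restrict (Icc a₀ a₁))).measurable.neg

lemma exp_sub_one_le {x : ℝ} : Real.exp x - 1 ≤ x * Real.exp x := by
  have h := Real.add_one_le_exp (-x)
  have h2 : Real.exp (-x) * Real.exp x = 1 := by rw [← Real.exp_add]; simp
  nlinarith [Real.exp_pos x]

/-- Lowering the payoff by `ε` on `A` raises the risk by at most
`ε e^{a₁ε} E[1_A · (-h′(X))]`: this is `log t ≤ t - 1` at `t = E[e^{-aY}]/E[e^{-aX}]`, combined with
`(e^{aε} - 1)/a ≤ ε e^{a₁ε}` and Fubini. -/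
lemma werm_sub_le_s18 {P : Measure Ω} [IsProbabilityMeasure P] {X Y : Ω → ℝ} (hX : Lpos P X)
    (hY : Lpos P Y) {A : Set Ω} (hA : MeasurableSet A) {ε : ℝ} (hε : 0 ≤ ε)
    (hYX : ∀ ω, Y ω = X ω - A.indicator (fun _ => ε) ω)
    {m : Measure ℝ} [IsProbabilityMeasure m] {a₀ a₁ : ℝ} (ha₀ : 0 < a₀) :
    werm P m a₀ a₁ Y ≤ werm P m a₀ a₁ X
      + ε * Real.exp (a₁ * ε) * ∫ ω in A, -hprime P m a₀ a₁ X ω ∂P := by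
  have hdens : Integrable (fun z : Ω × ℝ =>
      Real.exp (-z.2 * X z.1) / (∫ ω', Real.exp (-z.2 * X ω') ∂P))
      ((P.restrict A).prod (m.restrict (Icc a₀ a₁))) := by
    refine (integrable_density hX (m := m) (a₁ := a₁) ha₀).mono_measure ?_
    exact Measure.prod_mono Measure.restrict_le_self le_rfl
  have hswap : ∫ ω in A, -hprime P m a₀ a₁ X ω ∂P = ∫ a in Icc a₀ a₁,
      (∫ ω in A, Real.exp (-a * X ω) / (∫ ω', Real.exp (-a * X ω') ∂P) ∂P) ∂m := by
    simp only [hprime, neg_neg]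
    exact integral_integral_swap hdens
  rw [hswap, werm, werm, ← integral_const_mul, ← integral_add (integrableOn_entropic hX ha₀)
    (hdens.integral_prod_right.const_mul _)]
  refine setIntegral_mono_on (integrableOn_entropic hY ha₀)
    ((integrableOn_entropic hX ha₀).add (hdens.integral_prod_right.const_mul _))
    measurableSet_Icc fun a ha => ?_
  have h0 : 0 < a := ha₀.trans_le ha.1
  have hpX := mgf_pos hX h0.le
  have hpY := mgf_pos hY h0.le
  have hiX := integrable_exp_neg hX h0.le
  have hmgf : ∫ ω, Real.exp (-a * Y ω) ∂P = ∫ ω, Real.exp (-a * X ω) ∂P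
      + (Real.exp (a * ε) - 1) * ∫ ω in A, Real.exp (-a * X ω) ∂P := by
    rw [← integral_indicator hA, ← integral_const_mul,
      ← integral_add hiX ((hiX.indicator hA).const_mul _)]
    congr 1
    ext ω
    rw [hYX]
    by_cases h : ω ∈ A
    · simp only [h, indicator_of_mem]
      rw [show -a * (X ω - ε) = a * ε + -a * X ω by ring, Real.exp_add]
      ring
    · simp [h]
  dsimp only
  rw [integral_div]
  set Mx := ∫ ω, Real.exp (-a * X ω) ∂P
  set I := ∫ ω in A, Real.exp (-a * X ω) ∂P
  have hI : 0 ≤ I := integral_nonneg fun _ => (Real.exp_pos _).le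
  have hlog : Real.log (∫ ω, Real.exp (-a * Y ω) ∂P) ≤ Real.log Mx
      + (Real.exp (a * ε) - 1) * (I / Mx) := by
    have h := Real.log_le_sub_one_of_pos (div_pos hpY hpX)
    rw [Real.log_div hpY.ne' hpX.ne', hmgf] at h
    rw [hmgf]
    have : (Mx + (Real.exp (a * ε) - 1) * I) / Mx - 1 = (Real.exp (a * ε) - 1) * (I / Mx) := by
      field_simp
      ring
    linarith
  have he : Real.exp (a * ε) - 1 ≤ a * (ε * Real.exp (a₁ * ε)) := by
    have h1 : Real.exp (a * ε) ≤ Real.exp (a₁ * ε) := by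
      apply Real.exp_le_exp.2
      nlinarith [ha.2]
    have h2 := exp_sub_one_le (x := a * ε)
    nlinarith [mul_le_mul_of_nonneg_left h1 (mul_nonneg h0.le hε)]
  calc entropic P a Y ≤ (1 / a) * (Real.log Mx + a * (ε * Real.exp (a₁ * ε)) * (I / Mx)) := by
        refine mul_le_mul_of_nonneg_left (hlog.trans ?_) (by positivity)
        gcongr
    _ = entropic P a X + ε * Real.exp (a₁ * ε) * (I / Mx) := by
        change _ = (1 / a) * Real.log Mx + _
        field_simp

/-! ### Finiteness of the objective -/

lemma fullObj_eq {P : Measure Ω} {m : Measure ℝ} {a₀ a₁ : ℝ} {ρ : Ω → ℝ} {U : ℝ → ℝ}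
    {μ lam : ℝ} {Y : Ω → ℝ} (hU : Integrable (fun ω => U (Y ω)) P)
    (hρY : Integrable (fun ω => ρ ω * Y ω) P) (h0 : ∀ᵐ ω ∂P, 0 ≤ ρ ω * Y ω) :
    fullObj P m a₀ a₁ ρ U μ lam Y =
      ((∫ ω, U (Y ω) ∂P - μ * werm P m a₀ a₁ Y - lam * ∫ ω, ρ ω * Y ω ∂P : ℝ) : EReal) := by
  have hb : ((budget P ρ Y : ℝ≥0∞) : EReal) = ((∫ ω, ρ ω * Y ω ∂P : ℝ) : EReal) := by
    rw [budget, ← ofReal_integral_eq_lintegral_ofReal hρY h0, EReal.coe_ennreal_ofReal,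
      max_eq_left (integral_nonneg_of_ae h0)]
  have hu : eutil P U Y = ((∫ ω, U (Y ω) ∂P : ℝ) : EReal) := by
    have h1 := hU.lintegral_lt_top.ne
    have h2 : (∫⁻ ω, ENNReal.ofReal (-(U (Y ω))) ∂P) ≠ ∞ := hU.neg.lintegral_lt_top.ne
    rw [eutil, eint, integral_eq_lintegral_pos_part_sub_lintegral_neg_part hU, EReal.coe_sub,
      EReal.coe_ennreal_toReal h1, EReal.coe_ennreal_toReal h2]
  rw [fullObj, hb, hu]
  norm_cast

/-- A payoff with finite objective has integrable utility and integrable cost, as soon as its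
utility is bounded below. -/
lemma integrable_of_fullObj_eq {P : Measure Ω} [IsProbabilityMeasure P] {m : Measure ℝ}
    {a₀ a₁ : ℝ} {ρ : Ω → ℝ} {U : ℝ → ℝ}
    {μ lam : ℝ} (hlam : 0 < lam) {X : Ω → ℝ} {r c : ℝ}
    (hr : fullObj P m a₀ a₁ ρ U μ lam X = (r : EReal))
    (hmU : AEMeasurable (fun ω => U (X ω)) P) (hc : ∀ᵐ ω ∂P, c ≤ U (X ω))
    (hmρ : AEMeasurable (fun ω => ρ ω * X ω) P) (h0 : ∀ᵐ ω ∂P, 0 ≤ ρ ω * X ω) :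
    Integrable (fun ω => U (X ω)) P ∧ Integrable (fun ω => ρ ω * X ω) P := by
  have hneg : (∫⁻ ω, ENNReal.ofReal (-(U (X ω))) ∂P) ≠ ∞ := by
    refine ne_top_of_le_ne_top (b := ∫⁻ _, ENNReal.ofReal (-c) ∂P) (by simp) ?_
    refine lintegral_mono_ae ?_
    filter_upwards [hc] with ω hω
    exact ENNReal.ofReal_le_ofReal (by linarith)
  have hb : budget P ρ X ≠ ∞ := by
    intro h
    rw [fullObj, h, EReal.coe_ennreal_top, EReal.coe_mul_top_of_pos hlam, EReal.sub_top] at hr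
    exact EReal.bot_ne_coe _ hr
  have hpos : (∫⁻ ω, ENNReal.ofReal (U (X ω)) ∂P) ≠ ∞ := by
    intro h
    rw [fullObj, eutil, eint, h, EReal.coe_ennreal_top] at hr
    lift (∫⁻ ω, ENNReal.ofReal (-(U (X ω))) ∂P) to NNReal using hneg with x
    lift budget P ρ X to NNReal using hb with y
    have hx : (((x : ℝ≥0∞)) : EReal) = ((x : ℝ) : EReal) := rfl
    have hy : (((y : ℝ≥0∞)) : EReal) = ((y : ℝ) : EReal) := rfl
    rw [hx, hy, EReal.top_sub_coe, EReal.top_sub_coe, ← EReal.coe_mul, EReal.top_sub_coe] at hr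
    exact EReal.top_ne_coe _ hr
  refine ⟨⟨hmU.aestronglyMeasurable, ?_⟩, ⟨hmρ.aestronglyMeasurable, ?_⟩⟩
  · rw [hasFiniteIntegral_iff_norm]
    have : ∀ ω, ENNReal.ofReal ‖U (X ω)‖
        ≤ ENNReal.ofReal (-(U (X ω))) + ENNReal.ofReal (U (X ω)) := by
      intro ω
      rcases le_total 0 (U (X ω)) with h | h
      · rw [Real.norm_of_nonneg h]; exact le_add_self
      · rw [Real.norm_of_nonpos h]; exact le_self_add
    refine (lintegral_mono this).trans_lt ?_
    rw [lintegral_add_right' _ hmU.ennreal_ofReal]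
    exact ENNReal.add_lt_top.2 ⟨hneg.lt_top, hpos.lt_top⟩
  · rw [hasFiniteIntegral_iff_ofReal h0]
    exact hb.lt_top

/-! ### Perturbations of the maximizer -/

/-- The maximizer is a.s. positive: raising it to `ε` on `{X = 0}` gains
`(U ε - U 0) P(X = 0)` in utility, lowers the risk and costs only `O(ε)`, while
`(U ε - U 0)/ε → ∞`. -/
lemma pos_of_max {P : Measure Ω} [IsProbabilityMeasure P]
    {a₀ a₁ : ℝ} (ha₀ : 0 < a₀) {m : Measure ℝ} [IsProbabilityMeasure m]
    {ρ : Ω → ℝ} (hρint : Integrable ρ P)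
    {U U' : ℝ → ℝ}
    (hUc : ContinuousOn U (Set.Ici 0))
    (hUd : ∀ y : ℝ, 0 < y → HasDerivAt U (U' y) y)
    (hInada0 : Tendsto U' (nhdsWithin 0 (Set.Ioi 0)) atTop)
    {μ lam : ℝ} (hμ : 0 < μ)
    {X : Ω → ℝ} (hX : Lpos P X) (hUX : Integrable (fun ω => U (X ω)) P)
    (hρX : Integrable (fun ω => ρ ω * X ω) P)
    (hmax : ∀ Y, Lpos P Y → Integrable (fun ω => U (Y ω)) P →
      Integrable (fun ω => ρ ω * Y ω) P →
      ∫ ω, U (Y ω) ∂P - μ * werm P m a₀ a₁ Y - lam * ∫ ω, ρ ω * Y ω ∂P ≤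
      ∫ ω, U (X ω) ∂P - μ * werm P m a₀ a₁ X - lam * ∫ ω, ρ ω * X ω ∂P) :
    ∀ᵐ ω ∂P, 0 < X ω := by
  have hXm := hX.1
  set A : Set Ω := {ω | X ω ≤ 0} with hAdef
  have hA : MeasurableSet A := measurableSet_le hXm measurable_const
  have key : ∀ ε : ℝ, 0 < ε → (U ε - U 0) * P.real A ≤ lam * (ε * ∫ ω in A, ρ ω ∂P) := by
    intro ε hε
    have hYm : Measurable (fun ω => X ω + A.indicator (fun _ => ε) ω) :=
      hXm.add (measurable_const.indicator hA)
    have hXY : ∀ ω, X ω ≤ X ω + A.indicator (fun _ => ε) ω := fun ω =>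
      le_add_of_nonneg_right (indicator_nonneg (fun _ _ => hε.le) _)
    have hY : Lpos P (fun ω => X ω + A.indicator (fun _ => ε) ω) := by
      refine ⟨hYm, ?_⟩
      filter_upwards [hX.2] with ω hω
      exact hω.trans (hXY ω)
    have hUY : (fun ω => U (X ω + A.indicator (fun _ => ε) ω)) =ᵐ[P]
        fun ω => U (X ω) + A.indicator (fun _ => U ε - U 0) ω := by
      filter_upwards [hX.2] with ω hω
      by_cases h : ω ∈ A
      · have h0 : X ω = 0 := le_antisymm h hω
        simp [h, h0]
      · simp [h]
    have hρY : (fun ω => ρ ω * (X ω + A.indicator (fun _ => ε) ω)) =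
        fun ω => ρ ω * X ω + A.indicator (fun ω => ε * ρ ω) ω := by
      ext ω
      by_cases h : ω ∈ A
      · simp only [h, indicator_of_mem]; ring
      · simp [h]
    have hi1 : Integrable (A.indicator (fun _ => U ε - U 0)) P := (integrable_const _).indicator hA
    have hi2 : Integrable (A.indicator (fun ω => ε * ρ ω)) P :=
      (hρint.const_mul ε).indicator hA
    have h := hmax _ hY ((hUX.add hi1).congr hUY.symm) (by rw [hρY]; exact hρX.add hi2)
    have hw := werm_anti hX hY (ae_of_all _ hXY) (m := m) (a₁ := a₁) ha₀
    rw [integral_congr_ae hUY, hρY, integral_add hUX hi1, integral_add hρX hi2,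
      integral_indicator hA, integral_indicator hA, setIntegral_const, integral_const_mul,
      smul_eq_mul] at h
    have := mul_le_mul_of_nonneg_left hw hμ.le
    linarith
  have hA0 : P.real A = 0 := by
    by_contra hne
    have hp : 0 < P.real A := lt_of_le_of_ne measureReal_nonneg (Ne.symm hne)
    have hev := hInada0.eventually_gt_atTop ((lam * ∫ ω in A, ρ ω ∂P) / P.real A)
    obtain ⟨δ, hδ, hδ'⟩ := mem_nhdsGT_iff_exists_Ioo_subset.1 hev
    have hδ0 : (0 : ℝ) < δ := hδ
    obtain ⟨c, hc, hc'⟩ := exists_hasDerivAt_eq_slope U U' hδ0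
      (hUc.mono Icc_subset_Ici_self) (fun x hx => hUd x hx.1)
    have h1 : (lam * ∫ ω in A, ρ ω ∂P) / P.real A < U' c := hδ' hc
    have h2 := key δ hδ0
    rw [hc', sub_zero, div_lt_div_iff₀ hp hδ0] at h1
    linarith
  have hA1 : P A = 0 := (measureReal_eq_zero_iff).1 hA0
  filter_upwards [measure_eq_zero_iff_ae_notMem.1 hA1] with ω hω
  exact not_le.1 hω

/-- First-order inequality with a finite step `ε`. Lowering the payoff by `ε` on the set where the
inequality fails (and `ε ≤ X`) would improve the objective unless that set is null. -/
lemma step_of_max {P : Measure Ω} [IsProbabilityMeasure P]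
    {a₀ a₁ : ℝ} (ha₀ : 0 < a₀) {m : Measure ℝ} [IsProbabilityMeasure m]
    {ρ : Ω → ℝ} (hmρ : Measurable ρ) (hρint : Integrable ρ P)
    {U : ℝ → ℝ} (hUc : ContinuousOn U (Set.Ici 0)) (hUm : MonotoneOn U (Set.Ici 0))
    {μ lam : ℝ} (hμ : 0 < μ)
    {X : Ω → ℝ} (hX : Lpos P X) (hUX : Integrable (fun ω => U (X ω)) P)
    (hρX : Integrable (fun ω => ρ ω * X ω) P)
    (hmax : ∀ Y, Lpos P Y → Integrable (fun ω => U (Y ω)) P →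
      Integrable (fun ω => ρ ω * Y ω) P →
      ∫ ω, U (Y ω) ∂P - μ * werm P m a₀ a₁ Y - lam * ∫ ω, ρ ω * Y ω ∂P ≤
      ∫ ω, U (X ω) ∂P - μ * werm P m a₀ a₁ X - lam * ∫ ω, ρ ω * X ω ∂P)
    {ε : ℝ} (hε : 0 < ε) :
    ∀ᵐ ω ∂P, ε ≤ X ω → 0 ≤ U (X ω) - U (X ω - ε)
      - ε * (lam * ρ ω + μ * Real.exp (a₁ * ε) * hprime P m a₀ a₁ X ω) := by
  have hXm := hX.1
  have hHm := measurable_hprime (P := P) hXm (m := m) (a₀ := a₀) (a₁ := a₁)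
  have hHi := integrable_hprime (P := P) hX (m := m) (a₁ := a₁) ha₀
  -- `U` is unconstrained on `(-∞, 0)`; extending it continuously from `[0, ∞)` makes the
  -- exceptional set measurable.
  set V : ℝ → ℝ := fun y => U (max y 0) with hV
  have hVc : Continuous V := hUc.comp_continuous (by fun_prop) (fun y => le_max_right y 0)
  have hVU : ∀ y, 0 ≤ y → V y = U y := fun y hy => by simp only [hV, max_eq_left hy]
  have hVmono : Monotone V := fun x y hxy =>
    hUm (mem_Ici.2 (le_max_right _ _)) (mem_Ici.2 (le_max_right _ _)) (max_le_max_right _ hxy)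
  set A : Set Ω := {ω | ε ≤ X ω} ∩ {ω | V (X ω) - V (X ω - ε)
      - ε * (lam * ρ ω + μ * Real.exp (a₁ * ε) * hprime P m a₀ a₁ X ω) < 0} with hAdef
  have hA : MeasurableSet A := by
    refine (measurableSet_le measurable_const hXm).inter (measurableSet_lt ?_ measurable_const)
    have := hVc.measurable
    fun_prop
  set Y : Ω → ℝ := fun ω => X ω - A.indicator (fun _ => ε) ω with hYdef
  have hYm : Measurable Y := hXm.sub (measurable_const.indicator hA)
  have hY : Lpos P Y := by
    refine ⟨hYm, ?_⟩
    filter_upwards [hX.2] with ω hω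
    by_cases h : ω ∈ A
    · simpa [hYdef, h] using h.1
    · simpa [hYdef, h] using hω
  have hYX : ∀ ω, Y ω ≤ X ω := fun ω =>
    sub_le_self _ (indicator_nonneg (fun _ _ => hε.le) _)
  have hUVX : (fun ω => U (X ω)) =ᵐ[P] fun ω => V (X ω) := by
    filter_upwards [hX.2] with ω hω using (hVU _ hω).symm
  have hUVY : (fun ω => U (Y ω)) =ᵐ[P] fun ω => V (Y ω) := by
    filter_upwards [hY.2] with ω hω using (hVU _ hω).symm
  have hVX : Integrable (fun ω => V (X ω)) P := hUX.congr hUVX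
  have hVY : Integrable (fun ω => V (Y ω)) P := by
    refine Integrable.mono' (g := fun ω => |V 0| + |V (X ω)|)
      ((integrable_const _).add hVX.abs) (hVc.measurable.comp hYm).aestronglyMeasurable ?_
    filter_upwards [hY.2] with ω hω
    have h1 := hVmono hω
    have h2 := hVmono (hYX ω)
    rw [Real.norm_eq_abs, abs_le]
    constructor
    · linarith [neg_abs_le (V 0), abs_nonneg (V (X ω))]
    · linarith [le_abs_self (V (X ω)), abs_nonneg (V 0)]
  have hρY : (fun ω => ρ ω * Y ω) = fun ω => ρ ω * X ω - A.indicator (fun ω => ε * ρ ω) ω := by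
    ext ω
    by_cases h : ω ∈ A
    · simp only [hYdef, h, indicator_of_mem]; ring
    · simp [hYdef, h]
  have hi2 : Integrable (A.indicator (fun ω => ε * ρ ω)) P := (hρint.const_mul ε).indicator hA
  have h := hmax Y hY (hVY.congr hUVY.symm) (by rw [hρY]; exact hρX.sub hi2)
  have hw := werm_sub_le_s18 hX hY hA hε.le (fun _ => rfl) (m := m) (a₁ := a₁) ha₀
  rw [integral_congr_ae hUVY, integral_congr_ae hUVX, hρY, integral_sub hρX hi2,
    integral_indicator hA, integral_const_mul] at h
  rw [integral_neg] at hw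
  have hw' := mul_le_mul_of_nonneg_left hw hμ.le
  set G : Ω → ℝ := fun ω => V (Y ω) - V (X ω) + A.indicator
    (fun ω => ε * (lam * ρ ω + μ * Real.exp (a₁ * ε) * hprime P m a₀ a₁ X ω)) ω with hG
  have hi3 : Integrable
      (fun ω => ε * (lam * ρ ω + μ * Real.exp (a₁ * ε) * hprime P m a₀ a₁ X ω)) P :=
    ((hρint.const_mul _).add (hHi.const_mul _)).const_mul _
  have hGi : Integrable G P := (hVY.sub hVX).add (hi3.indicator hA)
  have hGA : ∀ ω ∈ A, 0 < G ω := by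
    intro ω hω
    have h2 : V (X ω) - V (X ω - ε)
      - ε * (lam * ρ ω + μ * Real.exp (a₁ * ε) * hprime P m a₀ a₁ X ω) < 0 := hω.2
    simp only [hG, hYdef, hω, indicator_of_mem]
    linarith
  have hG0 : 0 ≤ G := by
    intro ω
    by_cases hω : ω ∈ A
    · exact (hGA ω hω).le
    · simp [hG, hYdef, hω]
  have hGint : ∫ ω, G ω ∂P ≤ 0 := by
    have e1 : ∫ ω, G ω ∂P = ∫ ω, V (Y ω) ∂P - ∫ ω, V (X ω) ∂P
        + ε * (lam * ∫ ω in A, ρ ω ∂P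
          + μ * Real.exp (a₁ * ε) * ∫ ω in A, hprime P m a₀ a₁ X ω ∂P) := by
      have hVYX : Integrable (fun ω => V (Y ω) - V (X ω)) P := hVY.sub hVX
      rw [hG, integral_add hVYX (hi3.indicator hA), integral_sub hVY hVX,
        integral_indicator hA, integral_const_mul,
        integral_add (hρint.const_mul _).integrableOn (hHi.const_mul _).integrableOn,
        integral_const_mul, integral_const_mul]
    rw [e1]
    linarith
  have hGz := (integral_eq_zero_iff_of_nonneg hG0 hGi).1
    (le_antisymm hGint (integral_nonneg hG0))
  filter_upwards [hGz] with ω hω hle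
  by_contra hlt
  rw [not_le, ← hVU _ (hε.le.trans hle), ← hVU (X ω - ε) (by linarith)] at hlt
  exact (hGA ω ⟨hle, hlt⟩).ne' hω

/-- a maximizer of `E[U(X)] - μ h(X) - λ E[ρX]` over `L⁰₊` (with finite
supremum) satisfies `U′(X*) - λρ - μ h′(X*) ≥ 0` a.s. -/
theorem eu_lagrangian_foc_ge (P : Measure Ω) [IsProbabilityMeasure P]
    (a₀ a₁ : ℝ) (ha₀ : 0 < a₀) (ha₀₁ : a₀ < a₁)
    (m : Measure ℝ) [IsProbabilityMeasure m] (hm : m (Set.Icc a₀ a₁) = 1)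
    (ρ : Ω → ℝ) (hmρ : Measurable ρ) (hρ0 : ∀ᵐ ω ∂P, 0 < ρ ω) (hρint : Integrable ρ P)
    (U U' : ℝ → ℝ)
    (hUc : ContinuousOn U (Set.Ici 0))
    (hUd : ∀ y : ℝ, 0 < y → HasDerivAt U (U' y) y)
    (hU'c : ContinuousOn U' (Set.Ioi 0))
    (hUmono : StrictMonoOn U (Set.Ioi 0))
    (hUconc : StrictConcaveOn ℝ (Set.Ioi 0) U)
    (hInada0 : Tendsto U' (nhdsWithin 0 (Set.Ioi 0)) atTop)
    (hInadaInf : Tendsto U' atTop (nhds 0))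
    (μ lam : ℝ) (hμ : 0 < μ) (hlam : 0 < lam)
    (hfin : ∃ r : ℝ, sSup (fullObj P m a₀ a₁ ρ U μ lam '' {X | Lpos P X}) = (r : EReal))
    (X : Ω → ℝ) (hX : Lpos P X)
    (hXmax : ∀ Y, Lpos P Y →
      fullObj P m a₀ a₁ ρ U μ lam Y ≤ fullObj P m a₀ a₁ ρ U μ lam X) :
    ∀ᵐ ω ∂P, 0 ≤ U' (X ω) - lam * ρ ω - μ * hprime P m a₀ a₁ X ω := by

  obtain ⟨r, hr⟩ := hfin
  have hXr : fullObj P m a₀ a₁ ρ U μ lam X = (r : EReal) := by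
    rw [← hr]
    refine le_antisymm (le_sSup ⟨X, hX, rfl⟩) (sSup_le ?_)
    rintro _ ⟨Y, hY, rfl⟩
    exact hXmax Y hY
  have hUm : MonotoneOn U (Ici 0) := by
    intro x hx y hy hxy
    rcases (mem_Ici.1 hx).eq_or_lt with rfl | hx0
    · rcases (mem_Ici.1 hy).eq_or_lt with rfl | hy0
      · exact le_rfl
      · have ht : Tendsto U (nhdsWithin 0 (Ioi 0)) (nhds (U 0)) :=
          (hUc 0 self_mem_Ici).mono_left (nhdsWithin_mono _ Ioi_subset_Ici_self)
        refine le_of_tendsto ht ?_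
        filter_upwards [Ioo_mem_nhdsGT hy0] with z hz
        exact (hUmono hz.1 hy0 hz.2).le
    · exact hUmono.monotoneOn hx0 (hx0.trans_le hxy) hxy
  have hUX : Integrable (fun ω => U (X ω)) P ∧ Integrable (fun ω => ρ ω * X ω) P := by
    have hVc : Continuous (fun y => U (max y 0)) :=
      hUc.comp_continuous (by fun_prop) (fun y => le_max_right y 0)
    refine integrable_of_fullObj_eq (c := U 0) hlam hXr ?_ ?_ (hmρ.mul hX.1).aemeasurable ?_
    · refine (hVc.measurable.comp hX.1).aemeasurable.congr ?_
      filter_upwards [hX.2] with ω hω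
      simp [max_eq_left hω]
    · filter_upwards [hX.2] with ω hω
      exact hUm self_mem_Ici hω hω
    · filter_upwards [hX.2, hρ0] with ω hω hρω
      positivity
  obtain ⟨hUX, hρX⟩ := hUX
  have hmax : ∀ Y, Lpos P Y → Integrable (fun ω => U (Y ω)) P →
      Integrable (fun ω => ρ ω * Y ω) P →
      ∫ ω, U (Y ω) ∂P - μ * werm P m a₀ a₁ Y - lam * ∫ ω, ρ ω * Y ω ∂P ≤
      ∫ ω, U (X ω) ∂P - μ * werm P m a₀ a₁ X - lam * ∫ ω, ρ ω * X ω ∂P := by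
    intro Y hY h1 h2
    have hnn : ∀ Z, Lpos P Z → ∀ᵐ ω ∂P, 0 ≤ ρ ω * Z ω := fun Z hZ => by
      filter_upwards [hZ.2, hρ0] with ω hω hρω
      positivity
    have h := hXmax Y hY
    rw [fullObj_eq h1 h2 (hnn Y hY), fullObj_eq hUX hρX (hnn X hX)] at h
    exact EReal.coe_le_coe_iff.1 h
  have hpos := pos_of_max ha₀ hρint hUc hUd hInada0 hμ hX hUX hρX hmax
  have hstep : ∀ᵐ ω ∂P, ∀ n : ℕ, 1 / ((n : ℝ) + 1) ≤ X ω →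
      0 ≤ U (X ω) - U (X ω - 1 / ((n : ℝ) + 1)) - 1 / ((n : ℝ) + 1) *
        (lam * ρ ω + μ * Real.exp (a₁ * (1 / ((n : ℝ) + 1))) * hprime P m a₀ a₁ X ω) :=
    ae_all_iff.2 fun n =>
      step_of_max ha₀ hmρ hρint hUc hUm hμ hX hUX hρX hmax (by positivity)
  filter_upwards [hpos, hstep] with ω hω hn
  have he : Tendsto (fun n : ℕ => 1 / ((n : ℝ) + 1)) atTop (nhds 0) :=
    tendsto_one_div_add_atTop_nhds_zero_nat
  have he' : Tendsto (fun n : ℕ => -(1 / ((n : ℝ) + 1))) atTop (nhdsWithin 0 {0}ᶜ) := by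
    refine tendsto_nhdsWithin_iff.2 ⟨by simpa using he.neg, Eventually.of_forall fun n => ?_⟩
    have : (0 : ℝ) < 1 / ((n : ℝ) + 1) := by positivity
    simpa using (by positivity : (n : ℝ) + 1 ≠ 0)
  have hd := (hUd _ hω).tendsto_slope_zero.comp he'
  have hexp : Tendsto (fun n : ℕ => Real.exp (a₁ * (1 / ((n : ℝ) + 1)))) atTop (nhds 1) := by
    have := (Real.continuous_exp.tendsto _).comp (he.const_mul a₁)
    simpa [Function.comp_def] using this
  have hlim := (hd.sub_const (lam * ρ ω)).sub
    ((hexp.const_mul μ).mul_const (hprime P m a₀ a₁ X ω))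
  rw [mul_one] at hlim
  refine ge_of_tendsto hlim ?_
  filter_upwards [he.eventually_lt_const hω] with n hlt
  have h := hn n hlt.le
  set e : ℝ := 1 / ((n : ℝ) + 1) with hedef
  have hepos : 0 < e := by positivity
  simp only [Function.comp, smul_eq_mul]
  have heq : (-e)⁻¹ * (U (X ω + -e) - U (X ω)) - lam * ρ ω
      - μ * Real.exp (a₁ * e) * hprime P m a₀ a₁ X ω
      = (U (X ω) - U (X ω - e) - e * (lam * ρ ω
        + μ * Real.exp (a₁ * e) * hprime P m a₀ a₁ X ω)) / e := by
    rw [← sub_eq_add_neg]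
    field_simp
    ring
  have : 0 ≤ (U (X ω) - U (X ω - e) - e * (lam * ρ ω
        + μ * Real.exp (a₁ * e) * hprime P m a₀ a₁ X ω)) / e := div_nonneg h hepos.le
  rw [← heq] at this
  simpa [hedef] using this
end
end
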